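/- arXiv:2509.11751 — 9 statements merged into one kernel-verified Lean document; each statement's English description precedes it below -/
import Mathlib

section
/- Let n, d ≥ 1, let W ∈ ℝ^{n×d} have rows w_1ᵀ, …, w_nᵀ, let V₀ ∈ ℝ^{d×d} be symmetric positive definite, and let θ̂ ∈ ℝ^d. Set V = (WᵀW + V₀^{-1})^{-1} and let q_θ be the pdf of the d-variate Gaussian N(θ̂, V). For each i ∈ {1, …, n} fix y_i ∈ {0,1}, set μ_i = w_iᵀθ̂, and let q_i be the pdf of the N(μ_i, 1) distribution truncated to (0, ∞) if y_i = 1 and to (−∞, 0] if y_i = 0; let ẑ_i be the mean of q_i and ẑ = (ẑ_1, …, ẑ_n). Then the ELBO coincides with the log variational Bayes criterion evaluated at (ẑ, θ̂): ∫_{ℝ^d} ∫_{ℝ^n} q_θ(θ) ∏_{i=1}^n q_i(z_i) · [ log N_n(z; Wθ, I_n) + log N_d(θ; 0, V₀) − log q_θ(θ) − Σ_{i=1}^n log q_i(z_i) ] dz dθ = log N_n(ẑ; Wθ̂, I_n) + log N_d(θ̂; 0, V₀) − log q_θ(θ̂) − Σ_{i=1}^n log q_i(ẑ_i). -/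
open MeasureTheory Matrix Real

/-- pdf of the `k`-variate Gaussian with mean `m` and covariance `S`. -/
noncomputable def gaussPdf {k : ℕ} (m : Fin k → ℝ) (S : Matrix (Fin k) (Fin k) ℝ)
    (x : Fin k → ℝ) : ℝ :=
  (2 * Real.pi) ^ (-(k : ℝ) / 2) * S.det ^ (-(1 : ℝ) / 2) *
    Real.exp (-(1 / 2) * ((x - m) ⬝ᵥ (S⁻¹ *ᵥ (x - m))))

/-- standard normal density. -/
noncomputable def stdPdf (t : ℝ) : ℝ :=
  (2 * Real.pi) ^ (-(1 : ℝ) / 2) * Real.exp (-t ^ 2 / 2)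

/-- pdf of `N(μ, 1)` truncated to the set `S`. -/
noncomputable def truncPdf (μ : ℝ) (S : Set ℝ) (z : ℝ) : ℝ :=
  S.indicator (fun t => stdPdf (t - μ)) z / ∫ t in S, stdPdf (t - μ)

lemma stdPdf_eq (μ t : ℝ) : stdPdf (t - μ) = ProbabilityTheory.gaussianPDFReal μ 1 t := by
  unfold stdPdf ProbabilityTheory.gaussianPDFReal
  rw [show (-(1:ℝ)/2) = -(1/2) by ring, Real.rpow_neg (by positivity), ← Real.sqrt_eq_rpow]
  simp

lemma stdPdf_pos (t : ℝ) : 0 < stdPdf t := by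
  unfold stdPdf; positivity

lemma integrable_std (μ : ℝ) : Integrable (fun t => stdPdf (t - μ)) := by
  simp_rw [stdPdf_eq]; exact ProbabilityTheory.integrable_gaussianPDFReal μ 1

lemma integrable_id_std0 : Integrable (fun t => t * stdPdf t) := by
  have h := (integrable_mul_exp_neg_mul_sq (b := 1/2) (by norm_num)).const_mul
    ((2 * Real.pi) ^ (-(1 : ℝ) / 2))
  refine h.congr (ae_of_all _ fun t => ?_)
  simp only [stdPdf]
  rw [show -t ^ 2 / 2 = -(1/2) * t^2 by ring]
  ring

lemma integrable_id_std (μ : ℝ) : Integrable (fun t => t * stdPdf (t - μ)) := by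
  have h := (integrable_id_std0.comp_sub_right μ).add ((integrable_std μ).const_mul μ)
  refine h.congr (ae_of_all _ fun t => ?_)
  simp only [Pi.add_apply]
  ring

lemma integral_std0 : ∫ t, stdPdf t = 1 := by
  have := ProbabilityTheory.integral_gaussianPDFReal_eq_one 0 (v := 1) one_ne_zero
  simpa [← stdPdf_eq] using this

lemma integral_id_std0 : ∫ t, t * stdPdf t = 0 := by
  have h := integral_neg_eq_self (fun t : ℝ => t * stdPdf t) volume
  have h2 : ∀ t : ℝ, -t * stdPdf (-t) = -(t * stdPdf t) := by
    intro t; simp [stdPdf]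
  simp only [h2, integral_neg] at h
  linarith

lemma integral_prod_affine {n : ℕ} (f : Fin n → ℝ → ℝ) (hf : ∀ i, Integrable (f i))
    (hf1 : ∀ i, ∫ t, f i t = 1) (hm : ∀ i, Integrable (fun t => t * f i t))
    (c : ℝ) (a : Fin n → ℝ) :
    ∫ x : Fin n → ℝ, (∏ i, f i (x i)) * (c + ∑ j, a j * x j)
      = c + ∑ j, a j * ∫ t, t * f j t := by
  have hg : ∀ j (x : Fin n → ℝ), (∏ i, f i (x i)) * x j
      = ∏ i, (if i = j then (fun t => t * f i t) else f i) (x i) := by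
    intro j x
    rw [← Finset.mul_prod_erase Finset.univ _ (Finset.mem_univ j),
      ← Finset.mul_prod_erase Finset.univ (fun i => (if i = j then (fun t => t * f i t) else f i) (x i))
      (Finset.mem_univ j)]
    have : ∏ i ∈ Finset.univ.erase j, (if i = j then (fun t => t * f i t) else f i) (x i)
        = ∏ i ∈ Finset.univ.erase j, f i (x i) := by
      refine Finset.prod_congr rfl fun i hi => ?_
      rw [if_neg (Finset.ne_of_mem_erase hi)]
    rw [this]
    simp only [if_true]
    ring
  have hi : ∀ j, Integrable (fun x : Fin n → ℝ => (∏ i, f i (x i)) * x j) := by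
    intro j
    simp_rw [hg j]
    apply Integrable.fintype_prod (f := fun i => if i = j then (fun t => t * f i t) else f i)
    intro i
    split_ifs
    · exact hm i
    · exact hf i
  have hv : ∀ j, ∫ x : Fin n → ℝ, (∏ i, f i (x i)) * x j = ∫ t, t * f j t := by
    intro j
    simp_rw [hg j]
    rw [integral_fintype_prod_volume_eq_prod
      (f := fun i => if i = j then (fun t => t * f i t) else f i),
      ← Finset.mul_prod_erase Finset.univ _ (Finset.mem_univ j), Finset.prod_eq_one]
    · simp
    · intro i hi
      rw [if_neg (Finset.ne_of_mem_erase hi), hf1]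
  have h0 : Integrable (fun x : Fin n → ℝ => ∏ i, f i (x i)) := Integrable.fintype_prod hf
  have e : ∀ x : Fin n → ℝ, (∏ i, f i (x i)) * (c + ∑ j, a j * x j)
      = c * (∏ i, f i (x i)) + ∑ j, a j * ((∏ i, f i (x i)) * x j) := by
    intro x
    rw [mul_add, Finset.mul_sum, mul_comm]
    congr 1
    exact Finset.sum_congr rfl fun j _ => by ring
  simp_rw [e]
  rw [integral_add (h0.const_mul c) (integrable_finsetSum _ fun j _ => (hi j).const_mul _),
    integral_finsetSum _ fun j _ => (hi j).const_mul _]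
  simp_rw [integral_const_mul, hv]
  rw [integral_fintype_prod_volume_eq_prod]
  simp [hf1]

lemma gaussPdf_affine {d : ℕ} (m : Fin d → ℝ) (V : Matrix (Fin d) (Fin d) ℝ) (hV : V.PosDef)
    (c : ℝ) (a : Fin d → ℝ) :
    ∫ θ : Fin d → ℝ, gaussPdf m V θ * (c + a ⬝ᵥ (θ - m)) = c := by
  have hP : V⁻¹.PosDef := hV.inv
  obtain ⟨B, hB⟩ : ∃ B : Matrix (Fin d) (Fin d) ℝ, V⁻¹ = Bᵀ * B := by
    open scoped MatrixOrder in
    obtain ⟨B, hB⟩ := CStarAlgebra.nonneg_iff_eq_star_mul_self.mp hP.posSemidef.nonneg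
    exact ⟨B, by simpa [star_eq_conjTranspose] using hB⟩
  have hdet : V⁻¹.det = B.det ^ 2 := by rw [hB, det_mul, det_transpose]; ring
  have hB0 : B.det ≠ 0 := by
    intro h
    have := hP.det_pos
    rw [hdet, h] at this
    simp at this
  have hVd : V.det ^ (-(1 : ℝ) / 2) = |B.det| := by
    rw [show (-(1:ℝ)/2) = -(1/2) by ring, Real.rpow_neg hV.det_pos.le,
      ← Real.inv_rpow hV.det_pos.le, ← Real.sqrt_eq_rpow, ← Real.sqrt_sq_eq_abs, ← hdet,
      det_nonsing_inv, Ring.inverse_eq_inv']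
  let b : Fin d → ℝ := a ᵥ* B⁻¹
  let h : (Fin d → ℝ) → ℝ := fun u => (∏ i, stdPdf (u i)) * (c + ∑ j, b j * u j)
  have hq : ∀ θ, gaussPdf m V θ * (c + a ⬝ᵥ (θ - m)) = |B.det| * h (B *ᵥ (θ - m)) := by
    intro θ
    have e1 : a ⬝ᵥ (θ - m) = ∑ j, b j * (B *ᵥ (θ - m)) j := by
      change _ = b ⬝ᵥ (B *ᵥ (θ - m))
      rw [dotProduct_mulVec, vecMul_vecMul, nonsing_inv_mul _ (isUnit_iff_ne_zero.mpr hB0),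
        vecMul_one]
    have e2 : gaussPdf m V θ = |B.det| * ∏ i, stdPdf ((B *ᵥ (θ - m)) i) := by
      unfold gaussPdf stdPdf
      rw [Finset.prod_mul_distrib, ← Real.exp_sum, hVd, hB, ← mulVec_mulVec, dotProduct_mulVec,
        vecMul_transpose, Finset.prod_const, Finset.card_univ, Fintype.card_fin,
        ← Real.rpow_natCast, ← Real.rpow_mul (by positivity)]
      have : -(1/2) * ((B *ᵥ (θ - m)) ⬝ᵥ (B *ᵥ (θ - m)))
          = ∑ i, -(B *ᵥ (θ - m)) i ^ 2 / 2 := by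
        rw [dotProduct, Finset.mul_sum]
        exact Finset.sum_congr rfl fun i _ => by ring
      rw [this, show -(d:ℝ)/2 = -1/2 * d by ring]
      ring
    rw [e1, e2, mul_assoc]
  simp_rw [hq]
  rw [integral_sub_right_eq_self (fun θ => |B.det| * h (B *ᵥ θ)) m, integral_const_mul]
  have hc : Continuous h := by
    unfold h stdPdf
    fun_prop
  have hmap : ∫ u, h u ∂(Measure.map (toLin' B) volume) = ∫ θ, h (B *ᵥ θ) := by
    rw [integral_map (by
      exact (LinearMap.continuous_of_finiteDimensional (toLin' B)).aemeasurable)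
      hc.aestronglyMeasurable]
    simp [toLin'_apply]
  rw [← hmap, Real.map_matrix_volume_pi_eq_smul_volume_pi hB0, integral_smul_measure,
    ENNReal.toReal_ofReal (abs_nonneg _), smul_eq_mul, ← mul_assoc, ← abs_mul,
    mul_inv_cancel₀ hB0]
  have := integral_prod_affine (n := d) (fun _ => stdPdf)
    (fun _ => by simpa using integrable_std 0) (fun _ => integral_std0)
    (fun _ => integrable_id_std0) c b
  rw [show ∫ u, h u = _ from this, integral_id_std0]
  simp

lemma log_gaussPdf {k : ℕ} (m : Fin k → ℝ) (S : Matrix (Fin k) (Fin k) ℝ) (hS : S.PosDef)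
    (x : Fin k → ℝ) : Real.log (gaussPdf m S x)
      = Real.log ((2 * Real.pi) ^ (-(k : ℝ) / 2) * S.det ^ (-(1 : ℝ) / 2))
        - 1 / 2 * ((x - m) ⬝ᵥ (S⁻¹ *ᵥ (x - m))) := by
  have := hS.det_pos
  unfold gaussPdf
  rw [Real.log_mul (by positivity) (by positivity), Real.log_exp]
  ring

lemma log_truncPdf (μ : ℝ) (S : Set ℝ) (z : ℝ) (hz : z ∈ S)
    (hZ : 0 < ∫ t in S, stdPdf (t - μ)) : Real.log (truncPdf μ S z)
      = Real.log ((2 * Real.pi) ^ (-(1 : ℝ) / 2)) - Real.log (∫ t in S, stdPdf (t - μ))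
        - 1 / 2 * (z - μ) ^ 2 := by
  unfold truncPdf
  rw [Set.indicator_of_mem hz, Real.log_div (stdPdf_pos _).ne' hZ.ne']
  rw [show Real.log (stdPdf (z - μ)) = Real.log ((2 * Real.pi) ^ (-(1 : ℝ) / 2))
    + -(z - μ) ^ 2 / 2 by
    unfold stdPdf; rw [Real.log_mul (by positivity) (by positivity), Real.log_exp]]
  ring

lemma quad_identity {n d : ℕ} (W : Matrix (Fin n) (Fin d) ℝ) (M : Matrix (Fin d) (Fin d) ℝ)
    (hM : Mᵀ = M) (t θ : Fin d → ℝ) (z : Fin n → ℝ) :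
    -(1 / 2) * ((z - W *ᵥ θ) ⬝ᵥ (z - W *ᵥ θ)) - 1 / 2 * (θ ⬝ᵥ (M *ᵥ θ))
      + 1 / 2 * ((θ - t) ⬝ᵥ ((Wᵀ * W + M) *ᵥ (θ - t)))
      + 1 / 2 * ((z - W *ᵥ t) ⬝ᵥ (z - W *ᵥ t))
    = -(1 / 2) * (t ⬝ᵥ (M *ᵥ t)) + (z - W *ᵥ t) ⬝ᵥ (W *ᵥ (θ - t)) - (t ⬝ᵥ (M *ᵥ (θ - t))) := by
  obtain ⟨δ, rfl⟩ : ∃ δ, θ = t + δ := ⟨θ - t, by simp⟩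
  obtain ⟨r, rfl⟩ : ∃ r, z = W *ᵥ t + r := ⟨z - W *ᵥ t, by simp⟩
  have s : δ ⬝ᵥ (M *ᵥ t) = t ⬝ᵥ (M *ᵥ δ) := by
    rw [dotProduct_comm, dotProduct_mulVec, ← mulVec_transpose, hM]
  have w : δ ⬝ᵥ ((Wᵀ * W) *ᵥ δ) = (W *ᵥ δ) ⬝ᵥ (W *ᵥ δ) := by
    rw [← mulVec_mulVec, dotProduct_mulVec, vecMul_transpose]
  have e : W *ᵥ t + r - W *ᵥ (t + δ) = r - W *ᵥ δ := by rw [mulVec_add]; abel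
  rw [e, add_sub_cancel_left, add_sub_cancel_left, add_mulVec, mulVec_add]
  simp only [dotProduct_add, add_dotProduct, dotProduct_sub, sub_dotProduct, s, w,
    dotProduct_comm (W *ᵥ δ) r]
  ring

lemma setIntegral_std_pos (μ : ℝ) (S : Set ℝ) (hS : 0 < volume S) :
    0 < ∫ t in S, stdPdf (t - μ) := by
  rw [setIntegral_pos_iff_support_of_nonneg_ae (ae_of_all _ fun t => (stdPdf_pos _).le)
    (integrable_std μ).integrableOn]
  have : Function.support (fun t => stdPdf (t - μ)) = Set.univ := by
    ext t; simp [(stdPdf_pos (t - μ)).ne']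
  rwa [this, Set.univ_inter]

lemma trunc_integrable (μ : ℝ) (S : Set ℝ) (hS : MeasurableSet S) :
    Integrable (truncPdf μ S) :=
  ((integrable_std μ).indicator hS).div_const _

lemma trunc_id_integrable (μ : ℝ) (S : Set ℝ) (hS : MeasurableSet S) :
    Integrable (fun t => t * truncPdf μ S t) := by
  refine (((integrable_id_std μ).indicator hS).div_const (∫ t in S, stdPdf (t - μ))).congr
    (ae_of_all _ fun t => ?_)
  by_cases h : t ∈ S <;> simp [truncPdf, h, mul_div_assoc]

lemma trunc_integral (μ : ℝ) (S : Set ℝ) (hS : MeasurableSet S) (hp : 0 < volume S) :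
    ∫ t, truncPdf μ S t = 1 := by
  unfold truncPdf
  rw [integral_div, integral_indicator hS, div_self (setIntegral_std_pos μ S hp).ne']

lemma trunc_nonneg (μ : ℝ) (S : Set ℝ) (t : ℝ) : 0 ≤ truncPdf μ S t := by
  unfold truncPdf
  exact div_nonneg (Set.indicator_nonneg (fun _ _ => (stdPdf_pos _).le) _)
    (integral_nonneg fun _ => (stdPdf_pos _).le)

lemma trunc_zero (μ : ℝ) (S : Set ℝ) (t : ℝ) (h : t ∉ S) : truncPdf μ S t = 0 := by
  simp [truncPdf, h]

lemma mean_Ioi (μ : ℝ) : 0 < ∫ t, t * truncPdf μ (Set.Ioi 0) t := by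
  rw [integral_pos_iff_support_of_nonneg _ (trunc_id_integrable μ _ measurableSet_Ioi)]
  · have h : Set.Ioi (0:ℝ) ⊆ Function.support (fun t => t * truncPdf μ (Set.Ioi 0) t) := by
      intro t ht
      have hZ := setIntegral_std_pos μ (Set.Ioi 0) (by simp)
      have ht' : (0:ℝ) < t := ht
      have : 0 < truncPdf μ (Set.Ioi 0) t := by
        unfold truncPdf
        rw [Set.indicator_of_mem ht]
        exact div_pos (stdPdf_pos _) hZ
      exact (mul_pos ht' this).ne'
    exact lt_of_lt_of_le (by simp) (measure_mono h)
  · intro t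
    by_cases h : t ∈ Set.Ioi (0:ℝ)
    · exact mul_nonneg (le_of_lt h) (trunc_nonneg _ _ _)
    · simp [trunc_zero _ _ _ h]

lemma mean_Iic (μ : ℝ) : ∫ t, t * truncPdf μ (Set.Iic 0) t ≤ 0 := by
  refine integral_nonpos fun t => ?_
  by_cases h : t ∈ Set.Iic (0:ℝ)
  · exact mul_nonpos_of_nonpos_of_nonneg h (trunc_nonneg _ _ _)
  · simp [trunc_zero _ _ _ h]

/-- For the probit model, the ELBO coincides with the log variational Bayes
criterion evaluated at `(ẑ, θ̂)`. -/
theorem probit_elbo_eq_vbc (n d : ℕ) (hn : 1 ≤ n) (hd : 1 ≤ d)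
    (W : Matrix (Fin n) (Fin d) ℝ) (V₀ : Matrix (Fin d) (Fin d) ℝ)
    (hV₀ : V₀.PosDef) (θhat : Fin d → ℝ)
    (y : Fin n → ℕ) (hy : ∀ i, y i = 0 ∨ y i = 1)
    (V : Matrix (Fin d) (Fin d) ℝ) (hV : V = (Wᵀ * W + V₀⁻¹)⁻¹)
    (qθ : (Fin d → ℝ) → ℝ) (hqθ : qθ = gaussPdf θhat V)
    (μ : Fin n → ℝ) (hμ : μ = W *ᵥ θhat)
    (S : Fin n → Set ℝ)
    (hS : ∀ i, S i = if y i = 1 then Set.Ioi (0 : ℝ) else Set.Iic (0 : ℝ))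
    (q : Fin n → ℝ → ℝ) (hq : ∀ i, q i = truncPdf (μ i) (S i))
    (zhat : Fin n → ℝ) (hzhat : ∀ i, zhat i = ∫ z, z * q i z) :
    (∫ θ : Fin d → ℝ, ∫ z : Fin n → ℝ,
        qθ θ * (∏ i, q i (z i)) *
          (Real.log (gaussPdf (W *ᵥ θ) (1 : Matrix (Fin n) (Fin n) ℝ) z) +
            Real.log (gaussPdf (0 : Fin d → ℝ) V₀ θ) - Real.log (qθ θ) -
            ∑ i, Real.log (q i (z i)))) =
      Real.log (gaussPdf (W *ᵥ θhat) (1 : Matrix (Fin n) (Fin n) ℝ) zhat) +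
        Real.log (gaussPdf (0 : Fin d → ℝ) V₀ θhat) - Real.log (qθ θhat) -
        ∑ i, Real.log (q i (zhat i)) := by
  have hSm : ∀ i, MeasurableSet (S i) := by
    intro i; rw [hS]; split_ifs
    · exact measurableSet_Ioi
    · exact measurableSet_Iic
  have hSp : ∀ i, 0 < volume (S i) := by
    intro i; rw [hS]; split_ifs <;> simp
  have hzS : ∀ i, zhat i ∈ S i := by
    intro i
    rw [hzhat i, hq i, hS i]
    split_ifs
    · exact mean_Ioi _
    · exact mean_Iic _
  have hM : V₀⁻¹.PosDef := hV₀.inv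
  have hMt : (V₀⁻¹)ᵀ = V₀⁻¹ := by simpa using hM.isHermitian.eq
  have hP : (Wᵀ * W + V₀⁻¹).PosDef := by
    have := posSemidef_conjTranspose_mul_self W
    rw [conjTranspose_eq_transpose_of_trivial] at this
    exact PosDef.posSemidef_add this hM
  have hVp : V.PosDef := hV ▸ hP.inv
  have hVi : V⁻¹ = Wᵀ * W + V₀⁻¹ := by
    rw [hV, nonsing_inv_nonsing_inv _ (isUnit_iff_ne_zero.mpr hP.det_pos.ne')]
  obtain ⟨K, hK⟩ : ∃ K : ℝ, ∀ (θ : Fin d → ℝ) (z : Fin n → ℝ), (∀ i, z i ∈ S i) →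
      Real.log (gaussPdf (W *ᵥ θ) (1 : Matrix (Fin n) (Fin n) ℝ) z) +
            Real.log (gaussPdf (0 : Fin d → ℝ) V₀ θ) - Real.log (qθ θ) -
            ∑ i, Real.log (q i (z i))
        = K + (z - W *ᵥ θhat) ⬝ᵥ (W *ᵥ (θ - θhat)) - (θhat ⬝ᵥ (V₀⁻¹ *ᵥ (θ - θhat))) := by
    refine ⟨Real.log ((2 * Real.pi) ^ (-(n : ℝ) / 2)
        * (1 : Matrix (Fin n) (Fin n) ℝ).det ^ (-(1 : ℝ) / 2))
      + Real.log ((2 * Real.pi) ^ (-(d : ℝ) / 2) * V₀.det ^ (-(1 : ℝ) / 2))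
      - Real.log ((2 * Real.pi) ^ (-(d : ℝ) / 2) * V.det ^ (-(1 : ℝ) / 2))
      - ∑ i, (Real.log ((2 * Real.pi) ^ (-(1 : ℝ) / 2))
        - Real.log (∫ t in S i, stdPdf (t - μ i)))
      - 1 / 2 * (θhat ⬝ᵥ (V₀⁻¹ *ᵥ θhat)), fun θ z hz => ?_⟩
    have hs : ∑ i, Real.log (q i (z i)) = ∑ i, (Real.log ((2 * Real.pi) ^ (-(1 : ℝ) / 2))
        - Real.log (∫ t in S i, stdPdf (t - μ i)))
        - 1 / 2 * ((z - W *ᵥ θhat) ⬝ᵥ (z - W *ᵥ θhat)) := by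
      rw [dotProduct, Finset.mul_sum, ← Finset.sum_sub_distrib]
      refine Finset.sum_congr rfl fun i _ => ?_
      rw [hq i, log_truncPdf _ _ _ (hz i) (setIntegral_std_pos _ _ (hSp i)), ← hμ, Pi.sub_apply]
      ring
    rw [hs, hqθ, log_gaussPdf _ _ PosDef.one, log_gaussPdf _ _ hV₀, log_gaussPdf _ _ hVp, hVi,
      inv_one, one_mulVec, sub_zero]
    have := quad_identity W V₀⁻¹ hMt θhat θ z
    linarith
  rw [hK θhat zhat hzS]
  have hin : ∀ θ : Fin d → ℝ, (∫ z : Fin n → ℝ,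
        qθ θ * (∏ i, q i (z i)) *
          (Real.log (gaussPdf (W *ᵥ θ) (1 : Matrix (Fin n) (Fin n) ℝ) z) +
            Real.log (gaussPdf (0 : Fin d → ℝ) V₀ θ) - Real.log (qθ θ) -
            ∑ i, Real.log (q i (z i))))
      = gaussPdf θhat V θ * (K + ((zhat - W *ᵥ θhat) ᵥ* W - θhat ᵥ* V₀⁻¹) ⬝ᵥ (θ - θhat)) := by
    intro θ
    have h1 : ∀ z : Fin n → ℝ, qθ θ * (∏ i, q i (z i)) *
          (Real.log (gaussPdf (W *ᵥ θ) (1 : Matrix (Fin n) (Fin n) ℝ) z) +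
            Real.log (gaussPdf (0 : Fin d → ℝ) V₀ θ) - Real.log (qθ θ) -
            ∑ i, Real.log (q i (z i)))
        = qθ θ * ((∏ i, q i (z i)) * ((K - (W *ᵥ θhat) ⬝ᵥ (W *ᵥ (θ - θhat))
            - (θhat ⬝ᵥ (V₀⁻¹ *ᵥ (θ - θhat)))) + ∑ j, (W *ᵥ (θ - θhat)) j * z j)) := by
      intro z
      by_cases hz : ∀ i, z i ∈ S i
      · rw [hK θ z hz, sub_dotProduct, dotProduct_comm z]
        simp only [dotProduct]
        ring
      · push Not at hz
        obtain ⟨i, hi⟩ := hz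
        have : ∏ i, q i (z i) = 0 :=
          Finset.prod_eq_zero (Finset.mem_univ i) (by rw [hq i]; exact trunc_zero _ _ _ hi)
        rw [this]; simp
    simp_rw [h1]
    rw [integral_const_mul, integral_prod_affine q
      (fun i => by rw [hq i]; exact trunc_integrable _ _ (hSm i))
      (fun i => by rw [hq i]; exact trunc_integral _ _ (hSm i) (hSp i))
      (fun i => by rw [hq i]; exact trunc_id_integrable _ _ (hSm i))]
    simp_rw [← hzhat]
    change _ * (_ + (W *ᵥ (θ - θhat)) ⬝ᵥ zhat) = _
    rw [hqθ, sub_dotProduct, ← dotProduct_mulVec, ← dotProduct_mulVec, sub_dotProduct,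
      dotProduct_comm _ zhat]
    ring
  simp_rw [hin]
  rw [gaussPdf_affine _ _ hVp]
  simp
end

section
/- Let L*, L̄ : ℝ → ℝ be twice continuously differentiable and strictly concave, attaining their maxima at unique points β_VB = argmax L* and β_AVB = argmax L̄, respectively. Define the gap D := L* − L̄ and assume D is nonnegative, convex, D(0) = 0, and 0 is the unique global minimizer of D. Then sign(β_AVB) = sign(β_VB) and |β_AVB| ≤ |β_VB|, with equality |β_AVB| = |β_VB| if and only if β_VB = 0. -/
/-- Tangent line inequality for differentiable concave functions. -/
theorem concave_tangent_aux {f : ℝ → ℝ} (hf : ConcaveOn ℝ Set.univ f)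
    (hd : Differentiable ℝ f) (x y : ℝ) : f y - f x ≤ deriv f x * (y - x) := by
  rcases lt_trichotomy x y with h | h | h
  · have := hf.slope_le_of_hasDerivAt (Set.mem_univ x) (Set.mem_univ y) h (hd x).hasDerivAt
    rw [slope_def_field, div_le_iff₀ (by linarith)] at this
    exact this
  · subst h; simp
  · have := hf.le_slope_of_hasDerivAt (Set.mem_univ y) (Set.mem_univ x) h (hd x).hasDerivAt
    rw [slope_def_field, le_div_iff₀ (by linarith)] at this
    linarith

/-- Univariate AVB shrinkage: if `Lstar` and `Lbar` are twice continuously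
differentiable, strictly concave, with unique maximizers `βVB` and `βAVB`, and the
gap `D = Lstar - Lbar` is nonnegative, convex, vanishes at `0` and has `0` as its
unique global minimizer, then `βAVB` has the same sign as `βVB` and is no larger
in absolute value, with equality iff `βVB = 0`. -/
theorem avb_shrinks_vb_univariate (Lstar Lbar : ℝ → ℝ)
    (hLstar : ContDiff ℝ 2 Lstar) (hLbar : ContDiff ℝ 2 Lbar)
    (hconcS : StrictConcaveOn ℝ Set.univ Lstar)
    (hconcB : StrictConcaveOn ℝ Set.univ Lbar)
    (βVB βAVB : ℝ)
    (hVB : ∀ x, x ≠ βVB → Lstar x < Lstar βVB)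
    (hAVB : ∀ x, x ≠ βAVB → Lbar x < Lbar βAVB)
    (D : ℝ → ℝ) (hD : D = Lstar - Lbar)
    (hDnonneg : ∀ x, 0 ≤ D x) (hDconv : ConvexOn ℝ Set.univ D)
    (hD0 : D 0 = 0) (hDmin : ∀ x, x ≠ 0 → D 0 < D x) :
    Real.sign βAVB = Real.sign βVB ∧ |βAVB| ≤ |βVB| ∧
      (|βAVB| = |βVB| ↔ βVB = 0) := by
  have dS : Differentiable ℝ Lstar := hLstar.differentiable (by norm_num)
  have dB : Differentiable ℝ Lbar := hLbar.differentiable (by norm_num)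
  have dD : Differentiable ℝ D := by rw [hD]; exact dS.sub dB
  have eD : ∀ x, deriv D x = deriv Lstar x - deriv Lbar x := by
    intro x; rw [hD]; exact deriv_sub (dS x) (dB x)
  have tS := concave_tangent_aux hconcS.concaveOn dS
  have tB := concave_tangent_aux hconcB.concaveOn dB
  have tD : ∀ x y, deriv D x * (y - x) ≤ D y - D x := by
    intro x y
    have h := concave_tangent_aux hDconv.neg dD.neg x y
    have h2 : deriv (-D) x = - deriv D x := deriv.neg
    rw [h2] at h
    simp only [Pi.neg_apply] at h
    linarith
  have sv : deriv Lstar βVB = 0 := by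
    apply IsLocalMax.deriv_eq_zero
    refine Filter.Eventually.of_forall fun x => ?_
    by_cases h : x = βVB
    · rw [h]
    · exact (hVB x h).le
  have ba : deriv Lbar βAVB = 0 := by
    apply IsLocalMax.deriv_eq_zero
    refine Filter.Eventually.of_forall fun x => ?_
    by_cases h : x = βAVB
    · rw [h]
    · exact (hAVB x h).le
  have d0 : deriv D 0 = 0 := by
    apply IsLocalMin.deriv_eq_zero
    refine Filter.Eventually.of_forall fun x => ?_
    rw [hD0]; exact hDnonneg x
  have e0 : deriv Lstar 0 = deriv Lbar 0 := by linarith [eD 0]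
  by_cases hv : βVB = 0
  · have ha : βAVB = 0 := by
      by_contra ha
      have h1 := hAVB 0 (Ne.symm ha)
      have h2 := tB 0 βAVB
      rw [hv] at sv
      rw [← e0, sv] at h2
      linarith
    simp [hv, ha]
  · have h1 : 0 < deriv Lstar 0 * βVB := by
      have := hVB 0 (Ne.symm hv)
      have := tS 0 βVB
      rw [sub_zero] at this
      linarith
    have ha : βAVB ≠ 0 := by
      intro ha
      rw [ha] at ba
      rw [e0, ba] at h1
      linarith
    have h2 : 0 < deriv Lstar 0 * βAVB := by
      have := hAVB 0 (Ne.symm ha)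
      have := tB 0 βAVB
      rw [sub_zero, ← e0] at this
      linarith
    have h3 : deriv Lbar βVB * βVB < 0 := by
      have h := tD βVB 0
      have h' := hDmin βVB hv
      rw [eD, sv] at h
      linarith
    have hav : βVB ≠ βAVB := by
      intro h
      rw [h, ba] at h3
      linarith
    have h4 : 0 < deriv Lbar βVB * (βAVB - βVB) := by
      linarith [tB βVB βAVB, hAVB βVB hav]
    rcases lt_or_gt_of_ne hv with hneg | hpos
    · have hs : deriv Lstar 0 < 0 := by
        by_contra! h; nlinarith
      have hb : 0 < deriv Lbar βVB := by
        by_contra! h; nlinarith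
      have a1 : βAVB < 0 := by
        by_contra! h; nlinarith
      have a2 : βVB < βAVB := by
        by_contra! h; nlinarith
      rw [Real.sign_of_neg a1, Real.sign_of_neg hneg, abs_of_neg a1, abs_of_neg hneg]
      exact ⟨rfl, by linarith, fun h => by linarith, fun h => absurd h hv⟩
    · have hs : 0 < deriv Lstar 0 := by
        by_contra! h; nlinarith
      have hb : deriv Lbar βVB < 0 := by
        by_contra! h; nlinarith
      have a1 : 0 < βAVB := by
        by_contra! h; nlinarith
      have a2 : βAVB < βVB := by
        by_contra! h; nlinarith
      rw [Real.sign_of_pos a1, Real.sign_of_pos hpos, abs_of_pos a1, abs_of_pos hpos]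
      exact ⟨rfl, by linarith, fun h => by linarith, fun h => absurd h hv⟩
end

section
/- Let σ > 0 and let L : ℝ → (0, ∞) be twice continuously differentiable and log-concave (i.e., (log L)″ ≤ 0 everywhere) with ∫_ℝ (1 + z²) φ_σ(z − η) L(z) dz < ∞, where φ_σ(t) = (2πσ²)^{−1/2} e^{−t²/(2σ²)}. Let π_η be the probability measure on ℝ with density proportional to z ↦ φ_σ(z − η) L(z). Then the variance of π_η satisfies 0 < Var(π_η) ≤ σ². Consequently the posterior mean m(η) = ∫ z dπ_η(z) satisfies m′(η) = Var(π_η)/σ² ∈ (0, 1]. -/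
open MeasureTheory Real

/-- density of the `N(0, σ²)` distribution. -/
noncomputable def gpdf (σ t : ℝ) : ℝ :=
  (2 * Real.pi * σ ^ 2) ^ (-(1 : ℝ) / 2) * Real.exp (-t ^ 2 / (2 * σ ^ 2))

/-- One-dimensional Brascamp–Lieb inequality for the identity function. -/
lemma bl_aux (f r : ℝ → ℝ) (s c μ : ℝ) (hs : 0 < s) (hfpos : ∀ z, 0 < f z)
    (hf : ∀ z, HasDerivAt f (-(r z) * f z) z)
    (hr : ∀ z, (z - μ) ^ 2 / s ≤ (z - μ) * (r z - c))
    (h0 : Integrable f) (h1 : Integrable fun z => (z - μ) * f z)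
    (h2 : Integrable fun z => (z - μ) ^ 2 * f z)
    (hμ : ∫ z, (z - μ) * f z = 0) :
    ∫ z, (z - μ) ^ 2 * f z ≤ s * ∫ z, f z := by
  have hint : Integrable fun z => f z - s⁻¹ * ((z - μ) ^ 2 * f z) - c * ((z - μ) * f z) :=
    (h0.sub (h2.const_mul _)).sub (h1.const_mul _)
  have key : 0 ≤ ∫ z, (f z - s⁻¹ * ((z - μ) ^ 2 * f z) - c * ((z - μ) * f z)) := by
    have ht := intervalIntegral_tendsto_integral hint
      (Filter.tendsto_atBot_add_const_left Filter.atTop μ Filter.tendsto_neg_atTop_atBot)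
      (Filter.tendsto_atTop_add_const_left Filter.atTop μ Filter.tendsto_id)
    refine ge_of_tendsto ht ?_
    filter_upwards [Filter.eventually_ge_atTop (0 : ℝ)] with b hb
    have hd : ∀ z, HasDerivAt (fun z => (z - μ) * f z)
        (1 * f z + (z - μ) * (-(r z) * f z)) z := fun z =>
      ((hasDerivAt_id z).sub_const μ).mul (hf z)
    have := intervalIntegral.sub_le_integral_of_hasDeriv_right_of_le
      (a := μ + -b) (b := μ + b) (g := fun z => (z - μ) * f z)
      (φ := fun z => f z - s⁻¹ * ((z - μ) ^ 2 * f z) - c * ((z - μ) * f z))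
      (by linarith) (fun z _ => (hd z).continuousAt.continuousWithinAt)
      (fun z _ => (hd z).hasDerivWithinAt) hint.integrableOn
      (by
        intro z _
        have := mul_le_mul_of_nonneg_right (hr z) (hfpos z).le
        rw [div_eq_inv_mul] at this
        linarith)
    refine le_trans ?_ this
    have e1 := mul_nonneg hb (hfpos (μ + b)).le
    have e2 := mul_nonneg hb (hfpos (μ + -b)).le
    simp only [add_sub_cancel_left]
    linarith
  have h02 : Integrable fun z => f z - s⁻¹ * ((z - μ) ^ 2 * f z) := h0.sub (h2.const_mul _)
  rw [integral_sub h02 (h1.const_mul _),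
    integral_sub h0 (h2.const_mul _), integral_const_mul, integral_const_mul, hμ] at key
  have h3 : s⁻¹ * ∫ z, (z - μ) ^ 2 * f z ≤ ∫ z, f z := by linarith
  rwa [inv_mul_le_iff₀ hs] at h3

/-- Differentiation of exponential moments of a density. -/
lemma deriv_aux (w : ℝ → ℝ) (hw : Continuous w) (hwpos : ∀ z, 0 < w z)
    (hint : ∀ t, Integrable fun z => exp (t * z) * w z) (n : ℕ) (t : ℝ) :
    HasDerivAt (fun t => ∫ z, z ^ n * (exp (t * z) * w z))
      (∫ z, z ^ (n + 1) * (exp (t * z) * w z)) t := by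
  let ν : Measure ℝ := volume.withDensity fun z => ((w z).toNNReal : ENNReal)
  have hwm : Measurable fun z => (w z).toNNReal := hw.measurable.real_toNNReal
  have hset : ProbabilityTheory.integrableExpSet (id : ℝ → ℝ) ν = Set.univ := by
    ext u
    simp only [ProbabilityTheory.integrableExpSet, Set.mem_ofPred_eq, Set.mem_univ, iff_true, ν]
    rw [integrable_withDensity_iff_integrable_coe_smul hwm]
    refine (hint u).congr (Filter.Eventually.of_forall fun z => ?_)
    simp [Real.coe_toNNReal _ (hwpos z).le, mul_comm]
  have hI : ∀ (k : ℕ) (u : ℝ), ∫ z, (id z : ℝ) ^ k * exp (u * id z) ∂ν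
      = ∫ z, z ^ k * (exp (u * z) * w z) := by
    intro k u
    simp only [ν]
    rw [integral_withDensity_eq_integral_smul hwm]
    refine integral_congr_ae (Filter.Eventually.of_forall fun z => ?_)
    simp only [NNReal.smul_def, Real.coe_toNNReal _ (hwpos z).le, smul_eq_mul, id]
    ring
  have := ProbabilityTheory.hasDerivAt_integral_pow_mul_exp_real (X := (id : ℝ → ℝ)) (μ := ν)
    (t := t) (by rw [hset]; simp) n
  simpa only [hI] using this

theorem logconcave_posterior_variance_bound (σ : ℝ) (hσ : 0 < σ) (L : ℝ → ℝ)
    (hLpos : ∀ z, 0 < L z) (hL : ContDiff ℝ 2 L)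
    (hlogconc : ∀ z, deriv (deriv fun t => Real.log (L t)) z ≤ 0)
    (hint : ∀ η : ℝ, Integrable (fun z => (1 + z ^ 2) * (gpdf σ (z - η) * L z)))
    (C m V : ℝ → ℝ)
    (hC : C = fun η => ∫ z, gpdf σ (z - η) * L z)
    (hm : m = fun η => (C η)⁻¹ * ∫ z, z * (gpdf σ (z - η) * L z))
    (hV : V = fun η => (C η)⁻¹ * (∫ z, z ^ 2 * (gpdf σ (z - η) * L z)) - (m η) ^ 2) :
    ∀ η : ℝ, 0 < V η ∧ V η ≤ σ ^ 2 ∧ HasDerivAt m (V η / σ ^ 2) η ∧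
      V η / σ ^ 2 ∈ Set.Ioc (0 : ℝ) 1 := by
  have hs : 0 < σ ^ 2 := by positivity
  have hg : ∀ t, 0 < gpdf σ t := fun t => by unfold gpdf; positivity
  have hgc : Continuous (gpdf σ) := by unfold gpdf; fun_prop
  have hfpos : ∀ η z, 0 < gpdf σ (z - η) * L z := fun η z => mul_pos (hg _) (hLpos z)
  have hLc : Continuous L := hL.continuous
  have hfc : ∀ η, Continuous fun z => gpdf σ (z - η) * L z := fun η =>
    (hgc.comp (continuous_id.sub continuous_const)).mul hLc
  have i0 : ∀ η, Integrable fun z => gpdf σ (z - η) * L z := fun η => by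
    refine (hint η).mono' (hfc η).aestronglyMeasurable (Filter.Eventually.of_forall fun z => ?_)
    rw [Real.norm_of_nonneg (hfpos η z).le]
    nlinarith [hfpos η z, mul_nonneg (sq_nonneg z) (hfpos η z).le]
  have i1 : ∀ η, Integrable fun z => z * (gpdf σ (z - η) * L z) := fun η => by
    refine (hint η).mono' (continuous_id.mul (hfc η)).aestronglyMeasurable
      (Filter.Eventually.of_forall fun z => ?_)
    rw [norm_mul, Real.norm_of_nonneg (hfpos η z).le]
    refine mul_le_mul_of_nonneg_right ?_ (hfpos η z).le
    rw [Real.norm_eq_abs, abs_le]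
    constructor <;> nlinarith [sq_nonneg (z - 1), sq_nonneg (z + 1)]
  have i2 : ∀ η, Integrable fun z => z ^ 2 * (gpdf σ (z - η) * L z) := fun η => by
    refine ((hint η).sub (i0 η)).congr (Filter.Eventually.of_forall fun z => ?_)
    simp only [Pi.sub_apply]
    ring
  have hCpos : ∀ η, 0 < C η := fun η => by
    rw [hC]
    exact integral_pos_of_integrable_nonneg_nonzero (x := 0) (hfc η) (i0 η)
      (fun z => (hfpos η z).le) (hfpos η 0).ne'
  have hmC : ∀ η, ∫ z, z * (gpdf σ (z - η) * L z) = m η * C η := fun η => by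
    have := (hCpos η).ne'
    rw [hm]; field_simp
  have hC' : ∀ η, ∫ z, gpdf σ (z - η) * L z = C η := fun η => by rw [hC]
  have hVC : ∀ η, ∫ z, z ^ 2 * (gpdf σ (z - η) * L z) = (V η + m η ^ 2) * C η := fun η => by
    have := (hCpos η).ne'
    rw [hV]; field_simp; ring
  -- centred moments
  have j1 : ∀ η, Integrable fun z => (z - m η) * (gpdf σ (z - η) * L z) := fun η =>
    ((i1 η).sub ((i0 η).const_mul (m η))).congr
      (Filter.Eventually.of_forall fun z => by simp only [Pi.sub_apply]; ring)
  have j2 : ∀ η, Integrable fun z => (z - m η) ^ 2 * (gpdf σ (z - η) * L z) := fun η =>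
    (((i2 η).sub ((i1 η).const_mul (2 * m η))).add ((i0 η).const_mul (m η ^ 2))).congr
      (Filter.Eventually.of_forall fun z => by simp only [Pi.sub_apply, Pi.add_apply]; ring)
  have k1 : ∀ η, ∫ z, (z - m η) * (gpdf σ (z - η) * L z) = 0 := fun η => by
    have : ∀ z, (z - m η) * (gpdf σ (z - η) * L z)
      = z * (gpdf σ (z - η) * L z) - m η * (gpdf σ (z - η) * L z) := fun z => by ring
    simp only [this]
    rw [integral_sub (i1 η) ((i0 η).const_mul _), integral_const_mul, hmC, hC']
    ring
  have k2 : ∀ η, ∫ z, (z - m η) ^ 2 * (gpdf σ (z - η) * L z) = V η * C η := fun η => by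
    have : ∀ z, (z - m η) ^ 2 * (gpdf σ (z - η) * L z)
      = z ^ 2 * (gpdf σ (z - η) * L z) - (2 * m η) * (z * (gpdf σ (z - η) * L z))
        + m η ^ 2 * (gpdf σ (z - η) * L z) := fun z => by ring
    simp only [this]
    have h21 : Integrable fun z => z ^ 2 * (gpdf σ (z - η) * L z)
        - (2 * m η) * (z * (gpdf σ (z - η) * L z)) := (i2 η).sub ((i1 η).const_mul _)
    rw [integral_add h21 ((i0 η).const_mul _),
      integral_sub (i2 η) ((i1 η).const_mul _), integral_const_mul, integral_const_mul,
      hmC, hC', hVC]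
    ring
  intro η
  have hVpos : 0 < V η := by
    have : 0 < V η * C η := by
      rw [← k2]
      refine integral_pos_of_integrable_nonneg_nonzero (x := m η + 1)
        (((continuous_id.sub continuous_const).pow 2).mul (hfc η)) (j2 η)
        (fun z => mul_nonneg (sq_nonneg _) (hfpos η z).le) ?_
      have := (hfpos η (m η + 1)).ne'
      simpa using this
    exact pos_of_mul_pos_left this (hCpos η).le
  -- upper bound
  have hVle : V η ≤ σ ^ 2 := by
    have hlog : ContDiff ℝ 2 fun t => Real.log (L t) := hL.log fun z => (hLpos z).ne'
    have hdl : Differentiable ℝ (deriv fun t => Real.log (L t)) :=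
      (hlog.deriv' (n := 1)).differentiable (by norm_num)
    have hanti := antitone_of_deriv_nonpos hdl hlogconc
    have hLd : ∀ z, HasDerivAt L (deriv L z) z := fun z =>
      (hL.differentiable (by norm_num) z).hasDerivAt
    have hld : ∀ z, deriv (fun t => Real.log (L t)) z = deriv L z / L z := fun z =>
      ((hLd z).log (hLpos z).ne').deriv
    have hgd : ∀ z, HasDerivAt (fun z => gpdf σ (z - η))
        (-((z - η) / σ ^ 2) * gpdf σ (z - η)) z := fun z => by
      unfold gpdf
      have h1 := ((((hasDerivAt_id z).sub_const η).pow 2).neg.div_const (2 * σ ^ 2)).exp.const_mul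
        ((2 * Real.pi * σ ^ 2) ^ (-(1 : ℝ) / 2))
      refine h1.congr_deriv ?_
      simp
      field_simp
    have := bl_aux (fun z => gpdf σ (z - η) * L z)
      (fun z => (z - η) / σ ^ 2 - deriv (fun t => Real.log (L t)) z) (σ ^ 2)
      ((m η - η) / σ ^ 2 - deriv (fun t => Real.log (L t)) (m η)) (m η) hs (hfpos η)
      (fun z => ((hgd z).mul (hLd z)).congr_deriv (by
        rw [hld]
        have := (hLpos z).ne'
        field_simp
        ring))
      (fun z => by
        have h1 : 0 ≤ (z - m η) * (deriv (fun t => Real.log (L t)) (m η)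
            - deriv (fun t => Real.log (L t)) z) := by
          rcases le_total z (m η) with h | h
          · exact mul_nonneg_of_nonpos_of_nonpos (by linarith) (by linarith [hanti h])
          · exact mul_nonneg (by linarith) (by linarith [hanti h])
        have h2 : (z - m η) ^ 2 / σ ^ 2
          = (z - m η) * ((z - η) / σ ^ 2 - (m η - η) / σ ^ 2) := by ring
        rw [h2]
        linarith)
      (i0 η) (j1 η) (j2 η) (k1 η)
    rw [k2, hC'] at this
    exact le_of_mul_le_mul_right this (hCpos η)
  refine ⟨hVpos, hVle, ?_, div_pos hVpos hs, (div_le_one hs).2 hVle⟩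
  -- derivative of the posterior mean
  have hfac : ∀ η z, gpdf σ (z - η) * L z
      = exp (-η ^ 2 / (2 * σ ^ 2)) * (exp (η / σ ^ 2 * z) * (gpdf σ z * L z)) := fun η z => by
    unfold gpdf
    have : -(z - η) ^ 2 / (2 * σ ^ 2)
      = -η ^ 2 / (2 * σ ^ 2) + η / σ ^ 2 * z + -z ^ 2 / (2 * σ ^ 2) := by field_simp; ring
    rw [this, exp_add, exp_add]
    ring
  have hd := deriv_aux (fun z => gpdf σ z * L z) (hgc.mul hLc)
    (fun z => mul_pos (hg z) (hLpos z))
    (fun t => by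
      refine ((i0 (t * σ ^ 2)).const_mul (exp (-(t * σ ^ 2) ^ 2 / (2 * σ ^ 2)))⁻¹).congr
        (Filter.Eventually.of_forall fun z => ?_)
      simp only [hfac (t * σ ^ 2) z]
      rw [inv_mul_cancel_left₀ (exp_pos _).ne', mul_div_cancel_right₀ _ hs.ne'])
  have hmom : ∀ (k : ℕ) η, ∫ z, z ^ k * (gpdf σ (z - η) * L z) = exp (-η ^ 2 / (2 * σ ^ 2)) *
      ∫ z, z ^ k * (exp (η / σ ^ 2 * z) * (gpdf σ z * L z)) := fun k η => by
    rw [← integral_const_mul]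
    refine integral_congr_ae (Filter.Eventually.of_forall fun z => ?_)
    simp only [hfac η z]
    ring
  set M : ℕ → ℝ → ℝ := fun k t => ∫ z, z ^ k * (exp (t * z) * (gpdf σ z * L z)) with hM
  have hd' : ∀ k, HasDerivAt (fun η => M k (η / σ ^ 2)) (M (k + 1) (η / σ ^ 2) * (1 / σ ^ 2)) η :=
    fun k => HasDerivAt.comp (h₂ := M k) (h := fun η => η / σ ^ 2) η (hd k (η / σ ^ 2)) ((hasDerivAt_id η).div_const (σ ^ 2))
  have hm0 : ∀ η, C η = exp (-η ^ 2 / (2 * σ ^ 2)) * M 0 (η / σ ^ 2) := fun η => by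
    have := hmom 0 η
    simp only [pow_zero, one_mul, hC'] at this
    simpa [hM] using this
  have hm1 : ∀ η, m η * C η = exp (-η ^ 2 / (2 * σ ^ 2)) * M 1 (η / σ ^ 2) := fun η => by
    rw [← hmC, ← hmom]; simp
  have hm2 : ∀ η, (V η + m η ^ 2) * C η
      = exp (-η ^ 2 / (2 * σ ^ 2)) * M 2 (η / σ ^ 2) := fun η => by
    rw [← hVC, ← hmom]
  have hM0 : ∀ η, M 0 (η / σ ^ 2) ≠ 0 := fun η h => by
    have := hCpos η
    rw [hm0, h] at this
    simp at this
  have q1 : ∀ η, M 1 (η / σ ^ 2) = m η * M 0 (η / σ ^ 2) := fun η => by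
    have := hm1 η
    rw [hm0] at this
    refine mul_left_cancel₀ (exp_pos (-η ^ 2 / (2 * σ ^ 2))).ne' ?_
    linarith
  have q2 : M 2 (η / σ ^ 2) = (V η + m η ^ 2) * M 0 (η / σ ^ 2) := by
    have := hm2 η
    rw [hm0] at this
    refine mul_left_cancel₀ (exp_pos (-η ^ 2 / (2 * σ ^ 2))).ne' ?_
    linarith
  have hmq : m = fun η => M 1 (η / σ ^ 2) / M 0 (η / σ ^ 2) := by
    funext η
    rw [q1, mul_div_cancel_right₀ _ (hM0 η)]
  have hfin := (hd' 1).div (hd' 0) (hM0 η)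
  have hfin2 : HasDerivAt (fun η => M 1 (η / σ ^ 2) / M 0 (η / σ ^ 2)) (V η / σ ^ 2) η := by
    refine hfin.congr_deriv ?_
    have := hM0 η
    simp only [Nat.reduceAdd, zero_add]
    rw [q2, q1]
    field_simp
    ring
  rw [← hmq] at hfin2
  exact hfin2
end

section
/- Let R : ℝ → ℝ be twice continuously differentiable with R″(z) > 0 for all z and ∫_ℝ e^{−R(z)} dz < ∞, and let μ be the probability measure on ℝ with density proportional to e^{−R}. Then for every continuously differentiable f : ℝ → ℝ with ∫ f² dμ < ∞ and ∫ (f′(z))²/R″(z) dμ(z) < ∞, the variance satisfies Var_μ(f) ≤ ∫_ℝ (f′(z))²/R″(z) dμ(z), where Var_μ(f) = ∫ f² dμ − (∫ f dμ)². -/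
open MeasureTheory

open Filter Topology Set in
/-- The derivative of an integrable convex potential has a zero. -/
lemma bl_exists_zero (R : ℝ → ℝ) (hR : Differentiable ℝ R) (hc : Continuous (deriv R))
    (hint : Integrable fun z => Real.exp (-R z)) : ∃ z, deriv R z = 0 := by
  by_contra! hne
  have key : (∀ z, 0 < deriv R z) ∨ (∀ z, deriv R z < 0) := by
    by_contra! h
    obtain ⟨⟨a, ha⟩, ⟨b, hb⟩⟩ := h
    obtain ⟨z, hz⟩ := mem_range_of_exists_le_of_exists_ge hc ⟨a, ha⟩ ⟨b, hb⟩
    exact hne z hz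
  have bad : ∀ s : Set ℝ, MeasurableSet s → volume s = ⊤ → (∀ x ∈ s, R x ≤ R 0) → False := by
    intro s hs hv hle
    have h1 : IntegrableOn (fun _ : ℝ => Real.exp (-R 0)) s := by
      refine Integrable.mono' hint.integrableOn (by fun_prop) ?_
      refine (ae_restrict_iff' hs).2 (Eventually.of_forall fun x hx => ?_)
      rw [Real.norm_eq_abs, abs_of_pos (Real.exp_pos _)]
      exact Real.exp_le_exp.2 (neg_le_neg (hle x hx))
    rw [integrableOn_const_iff] at h1
    rcases h1 with h1 | h1
    · exact (Real.exp_pos (-R 0)).ne' (enorm_eq_zero.1 h1)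
    · simp [hv] at h1
  rcases key with h | h
  · exact bad (Iic 0) measurableSet_Iic Real.volume_Iic
      (fun x hx => (strictMono_of_deriv_pos h).monotone hx)
  · exact bad (Ici 0) measurableSet_Ici Real.volume_Ici
      (fun x hx => (strictAnti_of_deriv_neg h).antitone hx)

open Filter Topology Set in
lemma bl_core (r r' g g' p : ℝ → ℝ) (z0 : ℝ)
    (hr : ∀ z, HasDerivAt r (r' z) z) (hr' : Continuous r') (hpos : ∀ z, 0 < r' z)
    (hg : ∀ z, HasDerivAt g (g' z) z) (hg' : Continuous g')
    (hp : ∀ z, HasDerivAt p (-r z * p z) z) (hpp : ∀ z, 0 < p z)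
    (hr0 : r z0 = 0) (hg0 : g z0 = 0)
    (hi1 : Integrable fun z => p z * (g z) ^ 2)
    (hi2 : Integrable fun z => p z * ((g' z) ^ 2 / r' z)) :
    ∫ z, p z * (g z) ^ 2 ≤ ∫ z, p z * ((g' z) ^ 2 / r' z) := by
  have cg : Continuous g := continuous_iff_continuousAt.2 fun z => (hg z).continuousAt
  have cr : Continuous r := continuous_iff_continuousAt.2 fun z => (hr z).continuousAt
  have cp : Continuous p := continuous_iff_continuousAt.2 fun z => (hp z).continuousAt
  have rmono : StrictMono r := strictMono_of_deriv_pos fun z => by rw [(hr z).deriv]; exact hpos z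
  have rne : ∀ z, z ≠ z0 → r z ≠ 0 := fun z hz h => hz (rmono.injective (h.trans hr0.symm))
  set ψ : ℝ → ℝ := fun z => p z * ((g' z) ^ 2 / r' z) - p z * (g z) ^ 2 with hψ
  have cψ : Continuous ψ := by
    have : ∀ z, r' z ≠ 0 := fun z => (hpos z).ne'
    fun_prop (disch := assumption)
  have iψ : Integrable ψ := hi2.sub hi1
  set φ : ℝ → ℝ := fun z => g z ^ 2 / r z * p z with hφ
  have hφ0 : φ z0 = 0 := by simp [hφ, hr0]
  have dφ : ∀ z, z ≠ z0 → HasDerivAt φ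
      ((2 * g z * g' z * r z - g z ^ 2 * r' z) / r z ^ 2 * p z + g z ^ 2 / r z * (-r z * p z)) z := by
    intro z hz
    have h := (((hg z).pow 2).div (hr z) (rne z hz)).mul (hp z)
    refine HasDerivAt.congr_deriv (f := φ) h ?_
    simp
  have cφ0 : ContinuousAt φ z0 := by
    rw [continuousAt_iff_punctured_nhds, hφ0]
    have h1 := (hasDerivAt_iff_tendsto_slope.1 (hg z0))
    have h2 := (hasDerivAt_iff_tendsto_slope.1 (hr z0))
    have h3 : Tendsto g (𝓝[≠] z0) (𝓝 0) := hg0 ▸ (cg.tendsto z0).mono_left nhdsWithin_le_nhds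
    have h4 : Tendsto p (𝓝[≠] z0) (𝓝 (p z0)) := (cp.tendsto z0).mono_left nhdsWithin_le_nhds
    have h5 := ((h1.div h2 (hpos z0).ne').mul h3).mul h4
    rw [mul_zero, zero_mul] at h5
    refine h5.congr' ?_
    filter_upwards [self_mem_nhdsWithin] with z hz
    have hz' : z - z0 ≠ 0 := sub_ne_zero.2 hz
    have := rne z hz
    simp only [hφ, Pi.div_apply, slope_def_field, hg0, hr0, sub_zero]
    field_simp
  have cφ : Continuous φ := continuous_iff_continuousAt.2 fun z => by
    by_cases hz : z = z0
    · rw [hz]; exact cφ0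
    · exact (dφ z hz).continuousAt
  set F : ℝ → ℝ := fun z => (∫ t in z0..z, ψ t) - φ z with hF
  have dΨ : ∀ z, HasDerivAt (fun z => ∫ t in z0..z, ψ t) (ψ z) z := fun z =>
    intervalIntegral.integral_hasDerivAt_right (cψ.intervalIntegrable _ _)
      (cψ.stronglyMeasurableAtFilter _ _) cψ.continuousAt
  have cF : Continuous F :=
    (continuous_iff_continuousAt.2 fun z => (dΨ z).continuousAt).sub cφ
  have dF : ∀ z, z ≠ z0 → 0 ≤ deriv F z := by
    intro z hz
    have h0 := rne z hz
    have h1 := hpos z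
    have e : deriv F z = p z * ((g' z * r z - g z * r' z) ^ 2 / (r' z * r z ^ 2)) := by
      have hd : HasDerivAt F _ z := (dΨ z).sub (dφ z hz)
      rw [hd.deriv]
      simp only [hψ]
      have := h1.ne'
      field_simp
      ring
    rw [e]
    have := (hpp z).le
    positivity
  have diffF : ∀ z, z ≠ z0 → DifferentiableAt ℝ F z := fun z hz =>
    ((dΨ z).sub (dφ z hz)).differentiableAt
  have m1 : MonotoneOn F (Ici z0) := by
    apply monotoneOn_of_deriv_nonneg (convex_Ici z0) cF.continuousOn
    · rw [interior_Ici]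
      exact fun z hz => (diffF z (ne_of_gt hz)).differentiableWithinAt
    · rw [interior_Ici]
      exact fun z hz => dF z (ne_of_gt hz)
  have m2 : MonotoneOn F (Iic z0) := by
    apply monotoneOn_of_deriv_nonneg (convex_Iic z0) cF.continuousOn
    · rw [interior_Iic]
      exact fun z hz => (diffF z (ne_of_lt hz)).differentiableWithinAt
    · rw [interior_Iic]
      exact fun z hz => dF z (ne_of_lt hz)
  have F0 : F z0 = 0 := by simp [hF, hφ0]
  have hb : ∀ b, z0 ≤ b → 0 ≤ ∫ t in z0..b, ψ t := by
    intro b hb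
    have h1 := m1 self_mem_Ici hb hb
    have h2 : 0 ≤ r b := hr0 ▸ rmono.monotone hb
    have h3 : 0 ≤ φ b := mul_nonneg (div_nonneg (sq_nonneg _) h2) (hpp b).le
    rw [F0] at h1
    simp only [hF] at h1
    linarith
  have ha : ∀ a, a ≤ z0 → (∫ t in z0..a, ψ t) ≤ 0 := by
    intro a ha
    have h1 := m2 ha self_mem_Iic ha
    have h2 : r a ≤ 0 := hr0 ▸ rmono.monotone ha
    have h3 : φ a ≤ 0 := mul_nonpos_of_nonpos_of_nonneg
      (div_nonpos_of_nonneg_of_nonpos (sq_nonneg _) h2) (hpp a).le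
    rw [F0] at h1
    simp only [hF] at h1
    linarith
  have lim := intervalIntegral_tendsto_integral (μ := volume) iψ tendsto_neg_atTop_atBot
    (tendsto_id (α := ℝ) (x := atTop))
  have fin : 0 ≤ ∫ t, ψ t := by
    refine ge_of_tendsto lim ?_
    filter_upwards [eventually_ge_atTop z0, eventually_ge_atTop (-z0)] with x h1 h2
    have e := intervalIntegral.integral_add_adjacent_intervals
      (cψ.intervalIntegrable (μ := volume) (-x) z0) (cψ.intervalIntegrable z0 x)
    have e2 := intervalIntegral.integral_symm (μ := volume) (f := ψ) z0 (-x)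
    have h3 := hb x h1
    have h4 := ha (-x) (by linarith)
    simp only [id]
    linarith
  rw [hψ, integral_sub hi2 hi1] at fin
  linarith

/-- One-dimensional Brascamp–Lieb (weighted Poincaré) inequality: if `μ` is the
probability measure with density proportional to `e^{-R}` for a smooth strictly
convex potential `R`, then for every continuously differentiable `f`,
`Var_μ(f) ≤ ∫ (f′)²/R″ dμ`. -/
theorem brascamp_lieb_one_dim (R : ℝ → ℝ) (hR : ContDiff ℝ 2 R)
    (hR'' : ∀ z, 0 < deriv (deriv R) z)
    (hint : Integrable fun z => Real.exp (-R z))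
    (μ : Measure ℝ)
    (hμ : μ = volume.withDensity
      (fun z => ENNReal.ofReal (Real.exp (-R z) / ∫ t, Real.exp (-R t))))
    (f : ℝ → ℝ) (hf : ContDiff ℝ 1 f)
    (hf2 : Integrable (fun z => (f z) ^ 2) μ)
    (hfd : Integrable (fun z => (deriv f z) ^ 2 / deriv (deriv R) z) μ) :
    (∫ z, (f z) ^ 2 ∂μ) - (∫ z, f z ∂μ) ^ 2 ≤
      ∫ z, (deriv f z) ^ 2 / deriv (deriv R) z ∂μ := by
  have hR1 : ContDiff ℝ 1 (deriv R) := by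
    have h : ContDiff ℝ (1 + 1) R := by simpa [one_add_one_eq_two] using hR
    exact (contDiff_succ_iff_deriv.1 h).2.2
  have dR : Differentiable ℝ R := hR.differentiable (by norm_num)
  have dr : Differentiable ℝ (deriv R) := hR1.differentiable (by norm_num)
  have cr' : Continuous (deriv (deriv R)) := hR1.continuous_deriv (le_refl _)
  have df : Differentiable ℝ f := hf.differentiable (by norm_num)
  have cf' : Continuous (deriv f) := hf.continuous_deriv (le_refl _)
  obtain ⟨z0, hz0⟩ := bl_exists_zero R dR hR1.continuous hint
  have hZ : 0 < ∫ t, Real.exp (-R t) := integral_exp_pos hint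
  set Z := ∫ t, Real.exp (-R t) with hZdef
  set p : ℝ → ℝ := fun z => Real.exp (-R z) / Z with hp
  have cR : Continuous R := dR.continuous
  have cp : Continuous p := by fun_prop
  have ppos : ∀ z, 0 < p z := fun z => div_pos (Real.exp_pos _) hZ
  have mp : Measurable fun z => ENNReal.ofReal (p z) := cp.measurable.ennreal_ofReal
  have hI : ∀ h : ℝ → ℝ, ∫ z, h z ∂μ = ∫ z, p z * h z := by
    intro h
    rw [hμ, integral_withDensity_eq_integral_toReal_smul mp (by simp)]
    refine integral_congr_ae (Filter.Eventually.of_forall fun z => ?_)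
    simp [ENNReal.toReal_ofReal (ppos z).le]
  have hIi : ∀ h : ℝ → ℝ, Integrable h μ → Integrable (fun z => p z * h z) := by
    intro h hh
    rw [hμ, integrable_withDensity_iff_integrable_smul' mp (by simp)] at hh
    refine hh.congr (Filter.Eventually.of_forall fun z => ?_)
    simp [ENNReal.toReal_ofReal (ppos z).le]
  have hprob : IsProbabilityMeasure μ := by
    constructor
    rw [hμ, withDensity_apply _ MeasurableSet.univ, Measure.restrict_univ,
      ← ofReal_integral_eq_lintegral_ofReal (hint.div_const Z)
        (Filter.Eventually.of_forall fun z => (ppos z).le), integral_div, ← hZdef,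
      div_self hZ.ne', ENNReal.ofReal_one]
  have hf1 : Integrable f μ := by
    refine Integrable.mono' ((integrable_const (1:ℝ)).add hf2) df.continuous.aestronglyMeasurable ?_
    refine Filter.Eventually.of_forall fun z => ?_
    simp only [Pi.add_apply, Real.norm_eq_abs]
    nlinarith [sq_abs (f z), sq_nonneg (|f z| - 1), abs_nonneg (f z)]
  set c := f z0 with hc
  have i1 : Integrable (fun z => f z ^ 2 - 2 * c * f z) μ := hf2.sub (hf1.const_mul _)
  have hgeq : (fun z => (f z - c) ^ 2) = fun z => (f z ^ 2 - 2 * c * f z) + c ^ 2 := by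
    ext z; ring
  have hgi : Integrable (fun z => (f z - c) ^ 2) μ := by
    rw [hgeq]; exact i1.add (integrable_const _)
  have hgI : ∫ z, (f z - c) ^ 2 ∂μ = (∫ z, f z ^ 2 ∂μ) - 2 * c * (∫ z, f z ∂μ) + c ^ 2 := by
    rw [hgeq, integral_add i1 (integrable_const _), integral_sub hf2 (hf1.const_mul _),
      integral_const_mul]
    simp
  have main := bl_core (deriv R) (deriv (deriv R)) (fun z => f z - c) (deriv f) p z0
    (fun z => (dr z).hasDerivAt) cr' hR'' (fun z => (df z).hasDerivAt.sub_const c) cf'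
    (fun z => by
      have h := ((dR z).hasDerivAt.neg.exp).div_const Z
      refine HasDerivAt.congr_deriv (f := p) h ?_
      simp only [hp, Pi.neg_apply]
      ring) ppos hz0 (by simp [hc]) (hIi _ hgi) (hIi _ hfd)
  rw [← hI (fun z => (f z - c) ^ 2), ← hI (fun z => deriv f z ^ 2 / deriv (deriv R) z), hgI] at main
  nlinarith [sq_nonneg ((∫ z, f z ∂μ) - c)]
end

section
/- Let Z be a Gaussian random variable with mean μ and variance σ² > 0, and let S ⊆ ℝ be an interval with P(Z ∈ S) > 0. Then the conditional variance of Z given Z ∈ S is at most σ²: Var(Z | Z ∈ S) ≤ σ². -/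
open MeasureTheory ProbabilityTheory

lemma aux_deriv (m : ℝ) (v : NNReal) (hv : 0 < v) (c x : ℝ) :
    HasDerivAt (fun x => -(v : ℝ) * ((x - c) * gaussianPDFReal m v x))
      (gaussianPDFReal m v x * ((x - c) * (x - m) - v)) x := by
  have hv' : (v : ℝ) ≠ 0 := by exact_mod_cast hv.ne'
  have h1 : HasDerivAt (fun x : ℝ => -(x - m) ^ 2 / (2 * v)) (-(x - m) / v) x := by
    have := ((((hasDerivAt_id x).sub_const m).pow 2).neg).div_const (2 * (v : ℝ))
    refine HasDerivAt.congr_deriv (f := fun x : ℝ => -(x - m) ^ 2 / (2 * v)) this ?_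
    simp
    field_simp
    ring
  have h2 : HasDerivAt (gaussianPDFReal m v) (gaussianPDFReal m v x * (-(x - m) / v)) x := by
    rw [gaussianPDFReal_def]
    refine HasDerivAt.congr_deriv ((h1.exp).const_mul ((√(2 * Real.pi * v))⁻¹)) ?_
    ring
  have h3 := ((((hasDerivAt_id x).sub_const c).mul h2)).const_mul (-(v : ℝ))
  refine HasDerivAt.congr_deriv
    (f := fun x => -(v : ℝ) * ((x - c) * gaussianPDFReal m v x)) h3 ?_
  simp
  field_simp
  ring

lemma aux_cont (m : ℝ) (v : NNReal) : Continuous (gaussianPDFReal m v) := by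
  rw [gaussianPDFReal_def]
  fun_prop

lemma aux_Icc (m : ℝ) (v : NNReal) (hv : 0 < v) (a b c : ℝ) (hac : a ≤ c) (hcb : c ≤ b) :
    ∫ x in Set.Icc a b, ((x - c) * (x - m) - v) ∂(gaussianReal m v) ≤ 0 := by
  have hc := aux_cont m v
  have key : ∫ x in Set.Icc a b, ((x - c) * (x - m) - v) ∂(gaussianReal m v)
      = ∫ x in a..b, gaussianPDFReal m v x * ((x - c) * (x - m) - v) := by
    rw [intervalIntegral.integral_of_le (hac.trans hcb), ← integral_Icc_eq_integral_Ioc,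
      gaussianReal_of_var_ne_zero m hv.ne',
      setIntegral_withDensity_eq_setIntegral_toReal_smul (measurable_gaussianPDF m v)
        (ae_of_all _ fun _ => gaussianPDF_lt_top) _ measurableSet_Icc]
    simp [toReal_gaussianPDF]
  rw [key, intervalIntegral.integral_eq_sub_of_hasDerivAt
    (fun x _ => aux_deriv m v hv c x) ((by fun_prop : Continuous _).intervalIntegrable _ _)]
  have h1 := mul_nonneg v.2 (mul_nonneg (sub_nonneg.2 hcb) (gaussianPDFReal_nonneg m v b))
  have h2 := mul_nonneg v.2 (mul_nonneg (sub_nonneg.2 hac) (gaussianPDFReal_nonneg m v a))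
  simp only [NNReal.val_eq_coe] at h1 h2
  linarith

lemma aux_int (m : ℝ) (v : NNReal) (c : ℝ) :
    Integrable (fun x : ℝ => (x - c) * (x - m) - v) (gaussianReal m v) := by
  have h : MemLp (fun x : ℝ => x) 2 (gaussianReal m v) := memLp_id_gaussianReal' 2 (by simp)
  exact ((h.sub (memLp_const c)).integrable_mul (h.sub (memLp_const m))).sub
    (integrable_const _)

lemma aux_closed (m : ℝ) (v : NNReal) (hv : 0 < v) (S : Set ℝ) (hS : Convex ℝ S)
    (hc : IsClosed S) (c : ℝ) (hcS : c ∈ S) :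
    ∫ x in S, ((x - c) * (x - m) - v) ∂(gaussianReal m v) ≤ 0 := by
  have hU : (⋃ n : ℕ, S ∩ Set.Icc (c - n) (c + n)) = S := by
    ext x
    simp only [Set.mem_iUnion, Set.mem_inter_iff, Set.mem_Icc]
    refine ⟨fun ⟨_, h, _⟩ => h, fun h => ?_⟩
    obtain ⟨n, hn⟩ := exists_nat_ge |x - c|
    have := abs_le.1 hn
    exact ⟨n, h, by linarith, by linarith⟩
  have ht := tendsto_setIntegral_of_monotone (μ := gaussianReal m v)
    (f := fun x : ℝ => (x - c) * (x - m) - v)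
    (s := fun n : ℕ => S ∩ Set.Icc (c - n) (c + n))
    (fun n => hc.measurableSet.inter measurableSet_Icc)
    (fun i j hij => by
      have : (i : ℝ) ≤ j := by exact_mod_cast hij
      exact Set.inter_subset_inter_right _ (Set.Icc_subset_Icc (by linarith) (by linarith)))
    (aux_int m v c).integrableOn
  rw [hU] at ht
  refine le_of_tendsto' ht fun n => ?_
  have hmem : c ∈ S ∩ Set.Icc (c - n) (c + n) := ⟨hcS, by simp, by simp⟩
  have hconn : IsConnected (S ∩ Set.Icc (c - n) (c + n)) :=
    ⟨⟨c, hmem⟩, (hS.inter (convex_Icc _ _)).isPreconnected⟩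
  have he := eq_Icc_of_connected_compact hconn (isCompact_Icc.inter_left hc)
  rw [he] at hmem ⊢
  exact aux_Icc m v hv _ _ c hmem.1 hmem.2

lemma aux_main (m : ℝ) (v : NNReal) (hv : 0 < v)
    (S : Set ℝ) (hS : Convex ℝ S) (hc : IsClosed S)
    (hpos : 0 < gaussianReal m v S) :
    variance id ((gaussianReal m v)[|S]) ≤ (v : ℝ) := by
  have hP : IsProbabilityMeasure ((gaussianReal m v)[|S]) := cond_isProbabilityMeasure hpos.ne'
  have h : MemLp (fun x : ℝ => x) 2 (gaussianReal m v) := memLp_id_gaussianReal' 2 (by simp)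
  have hL : MemLp (fun x : ℝ => x) 2 ((gaussianReal m v)[|S]) :=
    (h.restrict S).smul_measure (ENNReal.inv_ne_top.2 hpos.ne')
  have hi : Integrable (fun x : ℝ => x) ((gaussianReal m v)[|S]) := hL.integrable (by norm_num)
  set c : ℝ := ∫ x, x ∂((gaussianReal m v)[|S]) with hcdef
  have hcS : c ∈ S := hS.integral_mem hc (ae_cond_mem hc.measurableSet) hi
  have h1 : ∫ x, ((x - c) * (x - m) - v) ∂((gaussianReal m v)[|S]) ≤ 0 := by
    rw [ProbabilityTheory.cond, integral_smul_measure]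
    exact smul_nonpos_of_nonneg_of_nonpos ENNReal.toReal_nonneg (aux_closed m v hv S hS hc c hcS)
  have hsq : Integrable (fun x : ℝ => (x - c) ^ 2) ((gaussianReal m v)[|S]) :=
    (hL.sub (memLp_const c)).integrable_sq
  have h2 : ∫ x, ((x - c) * (x - m) - v) ∂((gaussianReal m v)[|S])
      = ∫ x, (x - c) ^ 2 ∂((gaussianReal m v)[|S]) - v := by
    have : (fun x : ℝ => (x - c) * (x - m) - v)
      = fun x => ((x - c) ^ 2 + (c - m) * (x - c)) - v := by ext x; ring
    have hd : Integrable (fun x : ℝ => (c - m) * (x - c)) ((gaussianReal m v)[|S]) :=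
      (hi.sub (integrable_const c)).const_mul _
    have ha : Integrable (fun x : ℝ => (x - c) ^ 2 + (c - m) * (x - c)) ((gaussianReal m v)[|S]) :=
      hsq.add hd
    rw [this, integral_sub ha (integrable_const _), integral_add hsq hd,
      integral_const_mul, integral_sub hi (integrable_const c), ← hcdef]
    simp
  rw [variance_eq_integral aemeasurable_id]
  simp only [id]
  linarith

/-- Truncating a Gaussian to an interval never increases its variance: if
`Z ∼ N(m, v)` with `v > 0` and `S` is an interval (a convex subset of `ℝ`) with
`P(Z ∈ S) > 0`, then `Var(Z | Z ∈ S) ≤ v`. -/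
theorem truncated_gaussian_variance_le (m : ℝ) (v : NNReal) (hv : 0 < v)
    (S : Set ℝ) (hS : Convex ℝ S) (hSm : MeasurableSet S)
    (hpos : 0 < gaussianReal m v S) :
    variance id ((gaussianReal m v)[|S]) ≤ (v : ℝ) := by
  have hae : closure S =ᵐ[gaussianReal m v] S :=
    (gaussianReal_absolutelyContinuous m hv.ne').ae_le
      (closure_ae_eq_of_null_frontier (hS.addHaar_frontier volume))
  have he : (gaussianReal m v)[|S] = (gaussianReal m v)[|closure S] := by
    rw [ProbabilityTheory.cond, ProbabilityTheory.cond, measure_congr hae,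
      Measure.restrict_congr_set hae]
  rw [he]
  exact aux_main m v hv _ hS.closure isClosed_closure (by rwa [measure_congr hae])
end

section
/- Let X ∈ ℝ^{n×p} have full column rank, let W₀ = diag(w_1, …, w_n) with 0 ≤ w_i ≤ 1 for all i, and let κ > 1. Set G = XᵀX and M = I_p − κ^{-1} G^{-1} Xᵀ W₀ X. Then M is similar to the symmetric matrix I_p − κ^{-1} G^{-1/2} Xᵀ W₀ X G^{-1/2}, all eigenvalues of M are real, and every eigenvalue of M lies in the interval [1 − 1/κ, 1] ⊆ (0, 1]. -/
open Matrix

lemma avb_isUnit_of_rank {p : ℕ} (G : Matrix (Fin p) (Fin p) ℝ) (h : G.rank = p) : IsUnit G := by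
  rw [← Matrix.mulVec_surjective_iff_isUnit]
  have h2 : LinearMap.range G.mulVecLin = ⊤ := by
    apply Submodule.eq_top_of_finrank_eq
    simpa [Matrix.rank] using h
  exact LinearMap.range_eq_top.1 h2

open scoped MatrixOrder in
lemma avb_sqrt {p : ℕ} (G : Matrix (Fin p) (Fin p) ℝ) (h : G.PosSemidef) (hu : IsUnit G) :
    ∃ Q : Matrix (Fin p) (Fin p) ℝ, Q.PosDef ∧ Q.IsSymm ∧ Q * Q = G := by
  have hQ : CFC.sqrt G * CFC.sqrt G = G := CFC.sqrt_mul_sqrt_self G h.nonneg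
  have hp : (CFC.sqrt G).PosSemidef := (CFC.sqrt_nonneg G).posSemidef
  have hu2 : IsUnit (CFC.sqrt G) := by
    rw [Matrix.isUnit_iff_isUnit_det] at hu ⊢
    rw [← hQ, Matrix.det_mul] at hu
    exact isUnit_of_mul_isUnit_left hu
  refine ⟨CFC.sqrt G, hp.posDef_iff_isUnit.2 hu2, ?_, hQ⟩
  have := hp.1
  rwa [Matrix.IsHermitian, Matrix.conjTranspose_eq_transpose_of_trivial] at this

/-- The quadratic form `v* Yᵀ diag(d) Y v` for a real matrix. -/
lemma avb_quad {n p : ℕ} (X : Matrix (Fin n) (Fin p) ℝ) (d : Fin n → ℝ) (v : Fin p → ℂ) :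
    star v ⬝ᵥ (((Xᵀ * Matrix.diagonal d * X).map (algebraMap ℝ ℂ)) *ᵥ v) =
      ((∑ i, d i * Complex.normSq (((X.map (algebraMap ℝ ℂ)) *ᵥ v) i) : ℝ) : ℂ) := by
  have hY : (Xᵀ).map (algebraMap ℝ ℂ) = (X.map (algebraMap ℝ ℂ))ᴴ := by
    ext i j; simp [Matrix.conjTranspose_apply]
  rw [Matrix.map_mul, Matrix.map_mul, hY, Matrix.mul_assoc, ← Matrix.mulVec_mulVec,
    Matrix.dotProduct_mulVec, ← Matrix.star_mulVec, ← Matrix.mulVec_mulVec,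
    Matrix.diagonal_map (map_zero _)]
  simp only [dotProduct, Matrix.mulVec_diagonal]
  push_cast
  refine Finset.sum_congr rfl fun i _ => ?_
  rw [Complex.normSq_eq_conj_mul_self]
  simp
  ring

/-- Spectral contraction of the local AVB-to-VB map: with `G = XᵀX` positive
definite (full column rank `X`), `W₀ = diag(w)` with weights in `[0,1]` and
`κ > 1`, the matrix `M = I − κ⁻¹ G⁻¹ Xᵀ W₀ X` is similar (via the symmetric
positive-definite square root `Q` of `G`) to the symmetric matrix
`I − κ⁻¹ Q⁻¹ Xᵀ W₀ X Q⁻¹`, all its (complex) eigenvalues are real, and every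
eigenvalue lies in `[1 − 1/κ, 1] ⊆ (0, 1]`. -/
theorem avb_map_is_contraction (n p : ℕ) (X : Matrix (Fin n) (Fin p) ℝ)
    (hX : X.rank = p)
    (w : Fin n → ℝ) (hw : ∀ i, w i ∈ Set.Icc (0 : ℝ) 1)
    (W₀ : Matrix (Fin n) (Fin n) ℝ) (hW₀ : W₀ = Matrix.diagonal w)
    (κ : ℝ) (hκ : 1 < κ)
    (G : Matrix (Fin p) (Fin p) ℝ) (hG : G = Xᵀ * X)
    (M : Matrix (Fin p) (Fin p) ℝ)
    (hM : M = 1 - κ⁻¹ • (G⁻¹ * (Xᵀ * W₀ * X))) :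
    (∃ Q : Matrix (Fin p) (Fin p) ℝ, Q.PosDef ∧ Q.IsSymm ∧ Q * Q = G ∧
      (1 - κ⁻¹ • (Q⁻¹ * (Xᵀ * W₀ * X) * Q⁻¹)).IsSymm ∧
      M = Q⁻¹ * (1 - κ⁻¹ • (Q⁻¹ * (Xᵀ * W₀ * X) * Q⁻¹)) * Q) ∧
    (∀ μ ∈ spectrum ℂ (M.map (algebraMap ℝ ℂ)),
      μ.im = 0 ∧ μ.re ∈ Set.Icc (1 - 1 / κ) 1) ∧
    Set.Icc (1 - 1 / κ) (1 : ℝ) ⊆ Set.Ioc (0 : ℝ) 1 := by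
  have hκ0 : 0 < κ := by linarith
  have hGu : IsUnit G := by
    apply avb_isUnit_of_rank
    rw [hG, Matrix.rank_transpose_mul_self, hX]
  have hGdet : IsUnit G.det := (Matrix.isUnit_iff_isUnit_det G).1 hGu
  have hGp : G.PosSemidef := by
    have := Matrix.posSemidef_conjTranspose_mul_self X
    rwa [Matrix.conjTranspose_eq_transpose_of_trivial, ← hG] at this
  refine ⟨?_, ?_, ?_⟩
  · obtain ⟨Q, hQ, hQs, hQQ⟩ := avb_sqrt G hGp hGu
    have hQd : IsUnit Q.det := (Matrix.isUnit_iff_isUnit_det Q).1 hQ.isUnit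
    refine ⟨Q, hQ, hQs, hQQ, ?_, ?_⟩
    · rw [Matrix.IsSymm]
      simp [Matrix.transpose_sub, Matrix.transpose_smul, Matrix.transpose_mul,
        Matrix.transpose_nonsing_inv, hQs.eq, hW₀, Matrix.mul_assoc]
    · rw [hM, ← hQQ, Matrix.mul_inv_rev, Matrix.mul_sub, Matrix.sub_mul, Matrix.mul_one,
        Matrix.nonsing_inv_mul _ hQd, Matrix.mul_smul, Matrix.smul_mul]
      congr 2
      simp only [Matrix.mul_assoc]
      rw [Matrix.nonsing_inv_mul _ hQd, Matrix.mul_one]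
  · intro μ hμ
    have hGM : G * M = G - κ⁻¹ • (Xᵀ * W₀ * X) := by
      rw [hM, Matrix.mul_sub, Matrix.mul_one, Matrix.mul_smul,
        Matrix.mul_nonsing_inv_cancel_left _ _ hGdet]
    rw [← Matrix.spectrum_toLin', ← Module.End.hasEigenvalue_iff_mem_spectrum] at hμ
    obtain ⟨v, hv⟩ := hμ.exists_hasEigenvector
    have hv0 : v ≠ 0 := hv.2
    have hv1 : M.map (algebraMap ℝ ℂ) *ᵥ v = μ • v := by
      simpa using hv.apply_eq_smul
    have hGM1 := congrArg (fun A : Matrix (Fin p) (Fin p) ℝ =>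
      A.map (algebraMap ℝ ℂ)) (eq_sub_iff_add_eq.1 hGM)
    have hsm : (κ⁻¹ • (Xᵀ * W₀ * X)).map (algebraMap ℝ ℂ) =
        ((κ⁻¹ : ℝ) : ℂ) • (Xᵀ * W₀ * X).map (algebraMap ℝ ℂ) := by
      ext i j; simp
    have hG1 : G = Xᵀ * (Matrix.diagonal (fun _ => (1 : ℝ)) : Matrix (Fin n) (Fin n) ℝ) * X := by
      rw [Matrix.diagonal_one, Matrix.mul_one, hG]
    have ha := avb_quad X (fun _ => (1 : ℝ)) v
    have hb := avb_quad X w v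
    rw [← hG1] at ha
    rw [← hW₀] at hb
    set u := X.map (algebraMap ℝ ℂ) *ᵥ v with hu
    set a : ℝ := ∑ i, 1 * Complex.normSq (u i) with hadef
    set b : ℝ := ∑ i, w i * Complex.normSq (u i) with hbdef
    have hb0 : 0 ≤ b := Finset.sum_nonneg fun i _ =>
      mul_nonneg (hw i).1 (Complex.normSq_nonneg _)
    have hba : b ≤ a := Finset.sum_le_sum fun i _ =>
      mul_le_mul_of_nonneg_right (hw i).2 (Complex.normSq_nonneg _)
    have hane : a ≠ 0 := by
      intro h0
      rw [hadef, Finset.sum_eq_zero_iff_of_nonneg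
        (fun i _ => by simpa using Complex.normSq_nonneg _)] at h0
      have hu0 : u = 0 := by
        ext i
        simpa using h0 i (Finset.mem_univ i)
      have hGv : G.map (algebraMap ℝ ℂ) *ᵥ v = 0 := by
        rw [hG, Matrix.map_mul, ← Matrix.mulVec_mulVec, ← hu, hu0, Matrix.mulVec_zero]
      apply hv0
      have h3 : (G⁻¹.map (algebraMap ℝ ℂ)) *ᵥ (G.map (algebraMap ℝ ℂ) *ᵥ v) = v := by
        rw [Matrix.mulVec_mulVec, ← Matrix.map_mul, Matrix.nonsing_inv_mul _ hGdet]
        simp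
      rw [← h3, hGv, Matrix.mulVec_zero]
    have hapos : 0 < a := lt_of_le_of_ne (hb0.trans hba) (Ne.symm hane)
    have key : μ * (a : ℂ) + ((κ⁻¹ : ℝ) : ℂ) * (b : ℂ) = a := by
      have h4 := congrArg (fun A : Matrix (Fin p) (Fin p) ℂ => star v ⬝ᵥ (A *ᵥ v)) hGM1
      rw [Matrix.map_add _ (by simp), Matrix.map_mul, hsm, Matrix.add_mulVec,
        ← Matrix.mulVec_mulVec, hv1, Matrix.mulVec_smul, Matrix.smul_mulVec, dotProduct_add,
        dotProduct_smul, dotProduct_smul, ha, hb] at h4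
      simpa using h4
    have hre : μ.re * a + κ⁻¹ * b = a := by
      have := congrArg Complex.re key
      simpa using this
    have him : μ.im * a = 0 := by
      have := congrArg Complex.im key
      simpa using this
    have hki : 0 < κ⁻¹ := inv_pos.2 hκ0
    refine ⟨(mul_eq_zero.1 him).resolve_right hane, ?_, ?_⟩
    · rw [one_div]
      refine le_of_mul_le_mul_right ?_ hapos
      nlinarith [mul_le_mul_of_nonneg_left hba hki.le]
    · refine le_of_mul_le_mul_right ?_ hapos
      nlinarith [mul_nonneg hki.le hb0]
  · intro x hx
    have : 1 / κ < 1 := by rw [div_lt_one hκ0]; exact hκ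
    exact ⟨by linarith [hx.1], hx.2⟩
end

section
/- Let n ≥ 2, p ≥ 0, g > 0, and let X ∈ ℝ^{n×p} satisfy Xᵀι = 0 (centered columns, ι the vector of ones) and have the property that (ι : X) ∈ ℝ^{n×(p+1)} has full column rank. Set A = (1 + 1/g) XᵀX and P = I_n − n^{-1} ιιᵀ − X A^{-1} Xᵀ. Then for every z ∈ ℝ^n with zᵀPz > 0, ∫_0^∞ ∫_{ℝ^p} ∫_ℝ N_n(z; αι + Xβ, σ² I_n) · N_p(β; 0, g σ² (XᵀX)^{-1}) · σ^{-2} dα dβ d(σ²) = ( Γ((n−1)/2) / ( π^{(n−1)/2} √n ) ) · g^{-p/2} · |XᵀX|^{1/2} · |A|^{-1/2} · ( zᵀPz )^{-(n−1)/2}; in particular this integral is finite. (For p = 0 the β-integral and the factors g^{-p/2} |XᵀX|^{1/2} |A|^{-1/2} and X A^{-1} Xᵀ are absent.) -/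
open MeasureTheory Matrix Real

lemma aux_factor {p : ℕ} (A : Matrix (Fin p) (Fin p) ℝ) (hA : A.PosDef) :
    ∃ B : Matrix (Fin p) (Fin p) ℝ, A = Bᵀ * B := by
  open scoped MatrixOrder Matrix.Norms.L2Operator in
  have h := CStarAlgebra.nonneg_iff_eq_star_mul_self.mp (Matrix.nonneg_iff_posSemidef.mpr hA.posSemidef)
  obtain ⟨B, hB⟩ := h
  exact ⟨B, by simpa [Matrix.star_eq_conjTranspose] using hB⟩

lemma aux_gauss {p : ℕ} (A : Matrix (Fin p) (Fin p) ℝ) (hA : A.PosDef) (c : ℝ) (hc : 0 < c) :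
    ∫ β : Fin p → ℝ, Real.exp (-c * (β ⬝ᵥ (A *ᵥ β))) =
      (π / c) ^ ((p : ℝ) / 2) * A.det ^ (-(1 : ℝ) / 2) := by
  obtain ⟨B, rfl⟩ := aux_factor A hA
  have hd : 0 < (Bᵀ * B).det := hA.det_pos
  have hdB : B.det ≠ 0 := by
    intro h; rw [det_mul, h] at hd; simp at hd
  have h1 : ∀ β : Fin p → ℝ, Real.exp (-c * (β ⬝ᵥ ((Bᵀ * B) *ᵥ β))) =
      (fun y : Fin p → ℝ => ∏ i, Real.exp (-c * y i ^ 2)) (Matrix.toLin' B β) := by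
    intro β
    simp only [← Real.exp_sum, ← Finset.mul_sum]
    rw [← mulVec_mulVec, dotProduct_mulVec, vecMul_transpose, Matrix.toLin'_apply]
    simp [dotProduct, sq]
  simp_rw [h1]
  have hmap := Real.map_matrix_volume_pi_eq_smul_volume_pi hdB
  have hm : Continuous (Matrix.toLin' B) := LinearMap.continuous_of_finiteDimensional _
  rw [← integral_map (μ := volume) (φ := Matrix.toLin' B) hm.measurable.aemeasurable
    (f := fun y : Fin p → ℝ => ∏ i, Real.exp (-c * y i ^ 2))
    (Continuous.aestronglyMeasurable (by fun_prop))]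
  rw [hmap, integral_smul_measure]
  rw [integral_fintype_prod_volume_eq_pow (fun x : ℝ => Real.exp (-c * x ^ 2)), integral_gaussian]
  rw [ENNReal.toReal_ofReal (abs_nonneg _), smul_eq_mul, mul_comm, Fintype.card_fin]
  congr 1
  · rw [Real.sqrt_eq_rpow, ← Real.rpow_natCast, ← Real.rpow_mul (by positivity)]
    congr 1; ring
  · rw [det_mul, det_transpose, ← sq, ← sq_abs, ← Real.rpow_natCast, ← Real.rpow_mul (abs_nonneg _),
      abs_inv, ← Real.rpow_neg_one]
    congr 1; norm_num

lemma aux_invgamma (a q : ℝ) (ha : 0 < a) (hq : 0 < q) :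
    ∫ s in Set.Ioi (0:ℝ), s ^ (-a - 1) * Real.exp (-(q / s)) = q ^ (-a) * Real.Gamma a := by
  have h := integral_comp_rpow_Ioi (fun t : ℝ => t ^ (a - 1) * Real.exp (-(q * t))) (p := -1) (by norm_num)
  rw [Real.integral_rpow_mul_exp_neg_mul_Ioi ha hq] at h
  rw [Real.rpow_neg hq.le, ← Real.inv_rpow hq.le, ← one_div, ← h]
  refine setIntegral_congr_fun measurableSet_Ioi fun s hs => ?_
  have hs : 0 < s := hs
  simp only [smul_eq_mul, abs_neg, abs_one, one_mul]
  rw [← Real.rpow_mul hs.le, ← mul_assoc, ← Real.rpow_add hs, Real.rpow_neg_one, div_eq_mul_inv]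
  congr 2; ring

lemma aux_alpha (b m K : ℝ) :
    ∫ α : ℝ, Real.exp (-b * (α - m) ^ 2) * K = √(π / b) * K := by
  rw [integral_mul_const, integral_sub_right_eq_self (fun α : ℝ => Real.exp (-b * α ^ 2)) m,
    integral_gaussian]

lemma aux_posdef {n p : ℕ} (X : Matrix (Fin n) (Fin p) ℝ)
    (hrank : (Matrix.of fun i => Fin.cons (1 : ℝ) (fun j => X i j)
        : Matrix (Fin n) (Fin (p + 1)) ℝ).rank = p + 1) : (Xᵀ * X).PosDef := by
  rw [← conjTranspose_eq_transpose_of_trivial]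
  apply PosDef.conjTranspose_mul_self
  set M := (Matrix.of fun i => Fin.cons (1 : ℝ) (fun j => X i j)
        : Matrix (Fin n) (Fin (p + 1)) ℝ) with hM
  have hinj : Function.Injective M.mulVecLin := by
    rw [← LinearMap.ker_eq_bot]
    have := LinearMap.finrank_range_add_finrank_ker M.mulVecLin
    rw [← Matrix.rank, hrank] at this
    simp at this
    exact this
  intro u v huv
  have key : ∀ w : Fin p → ℝ, M *ᵥ (Fin.cons 0 w : Fin (p+1) → ℝ) = X *ᵥ w := by
    intro w; ext i
    simp [hM, mulVec, dotProduct, Fin.sum_univ_succ]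
  have : M.mulVecLin (Fin.cons 0 u : Fin (p+1) → ℝ) = M.mulVecLin (Fin.cons 0 v : Fin (p+1) → ℝ) := by
    simp only [mulVecLin_apply, key]; exact huv
  exact (Fin.cons_injective2 (hinj this)).2

lemma aux_quad {n p : ℕ} (X : Matrix (Fin n) (Fin p) ℝ) (A : Matrix (Fin p) (Fin p) ℝ)
    (hA : A.PosDef) (z : Fin n → ℝ) (β : Fin p → ℝ) :
    (β - A⁻¹ *ᵥ (Xᵀ *ᵥ z)) ⬝ᵥ (A *ᵥ (β - A⁻¹ *ᵥ (Xᵀ *ᵥ z))) =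
      β ⬝ᵥ (A *ᵥ β) - 2 * (z ⬝ᵥ (X *ᵥ β)) + z ⬝ᵥ ((X * A⁻¹ * Xᵀ) *ᵥ z) := by
  have hu : IsUnit A.det := hA.det_pos.ne'.isUnit
  have hsym : Aᵀ = A := by
    have h := hA.1.eq
    rwa [conjTranspose_eq_transpose_of_trivial] at h
  have h1 : A *ᵥ (A⁻¹ *ᵥ (Xᵀ *ᵥ z)) = Xᵀ *ᵥ z := by
    rw [mulVec_mulVec, mul_nonsing_inv _ hu, one_mulVec]
  set b := A⁻¹ *ᵥ (Xᵀ *ᵥ z) with hb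
  have h2 : b ⬝ᵥ (A *ᵥ β) = z ⬝ᵥ (X *ᵥ β) := by
    rw [dotProduct_mulVec, ← mulVec_transpose, hsym, h1, mulVec_transpose, dotProduct_mulVec]
  have h3 : β ⬝ᵥ (Xᵀ *ᵥ z) = z ⬝ᵥ (X *ᵥ β) := by
    rw [dotProduct_comm, mulVec_transpose, dotProduct_mulVec]
  have h4 : z ⬝ᵥ ((X * A⁻¹ * Xᵀ) *ᵥ z) = b ⬝ᵥ (Xᵀ *ᵥ z) := by
    rw [← mulVec_mulVec, ← mulVec_mulVec, ← hb, dotProduct_mulVec, dotProduct_comm, mulVec_transpose]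
  rw [h4, mulVec_sub, h1, sub_dotProduct, dotProduct_sub, dotProduct_sub, h2, h3]
  ring

lemma aux_sum {n : ℕ} (hn : 0 < n) (z w : Fin n → ℝ) (hw : ∑ i, w i = 0) (α : ℝ) :
    ∑ i, (z i - (α + w i)) * (z i - (α + w i)) =
      n * (α - (n : ℝ)⁻¹ * ∑ i, z i) ^ 2 + (z ⬝ᵥ z - (n : ℝ)⁻¹ * (∑ i, z i) ^ 2)
        - 2 * (z ⬝ᵥ w) + w ⬝ᵥ w := by
  have h : ∀ i, (z i - (α + w i)) * (z i - (α + w i)) =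
      z i * z i + α ^ 2 + w i * w i - (2 * α) * z i - 2 * (z i * w i) + (2 * α) * w i := by
    intro i; ring
  simp only [h, Finset.sum_add_distrib, Finset.sum_sub_distrib, ← Finset.mul_sum, hw, dotProduct]
  have hn' : (n : ℝ) ≠ 0 := by positivity
  simp
  field_simp
  ring

lemma aux_exponent {n p : ℕ} (hn : 0 < n)
    (g : ℝ) (hg : 0 < g) (X : Matrix (Fin n) (Fin p) ℝ)
    (hcent : Xᵀ *ᵥ (fun _ => (1 : ℝ)) = 0)
    (hG : (Xᵀ * X).PosDef)
    (A : Matrix (Fin p) (Fin p) ℝ) (hA : A = (1 + 1 / g) • (Xᵀ * X))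
    (P : Matrix (Fin n) (Fin n) ℝ)
    (hP : P = 1 - (n : ℝ)⁻¹ • (Matrix.of fun _ _ => (1 : ℝ)) - X * A⁻¹ * Xᵀ)
    (z : Fin n → ℝ) (s : ℝ) (hs : 0 < s) (β : Fin p → ℝ) (α : ℝ) :
    (z - fun i => α + (X *ᵥ β) i) ⬝ᵥ
        ((s • (1 : Matrix (Fin n) (Fin n) ℝ))⁻¹ *ᵥ (z - fun i => α + (X *ᵥ β) i)) +
      (β - 0) ⬝ᵥ (((g * s) • (Xᵀ * X)⁻¹)⁻¹ *ᵥ (β - 0)) =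
    s⁻¹ * (n * (α - (n : ℝ)⁻¹ * ∑ i, z i) ^ 2 +
      (β - A⁻¹ *ᵥ (Xᵀ *ᵥ z)) ⬝ᵥ (A *ᵥ (β - A⁻¹ *ᵥ (Xᵀ *ᵥ z))) + z ⬝ᵥ (P *ᵥ z)) := by
  have hAp : A.PosDef := by
    rw [hA]; exact hG.smul (by positivity)
  have hi1 : (s • (1 : Matrix (Fin n) (Fin n) ℝ))⁻¹ = s⁻¹ • 1 := by
    apply inv_eq_right_inv
    rw [smul_mul_smul_comm, mul_inv_cancel₀ hs.ne']; simp
  have hi2 : ((g * s) • (Xᵀ * X)⁻¹)⁻¹ = (g * s)⁻¹ • (Xᵀ * X) := by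
    apply inv_eq_right_inv
    rw [smul_mul_smul_comm, mul_inv_cancel₀ (by positivity), nonsing_inv_mul _ hG.det_pos.ne'.isUnit]
    simp
  have hw : ∑ i, (X *ᵥ β) i = 0 := by
    have : (fun _ => (1:ℝ)) ⬝ᵥ (X *ᵥ β) = 0 := by
      rw [dotProduct_mulVec, ← mulVec_transpose, hcent, zero_dotProduct]
    simpa [dotProduct] using this
  have hww : (X *ᵥ β) ⬝ᵥ (X *ᵥ β) = β ⬝ᵥ ((Xᵀ * X) *ᵥ β) := by
    rw [← mulVec_mulVec, dotProduct_mulVec β, vecMul_transpose]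
  have hone : z ⬝ᵥ ((Matrix.of fun (_ _ : Fin n) => (1 : ℝ)) *ᵥ z) = (∑ i, z i) ^ 2 := by
    simp [dotProduct, mulVec, ← Finset.sum_mul, sq]
  have hs1 := aux_sum hn z (X *ᵥ β) hw α
  have hs2 : (z - fun i => α + (X *ᵥ β) i) ⬝ᵥ (z - fun i => α + (X *ᵥ β) i) =
    ∑ i, (z i - (α + (X *ᵥ β) i)) * (z i - (α + (X *ᵥ β) i)) := rfl
  rw [aux_quad X A hAp, hi1, hi2, hP, smul_mulVec, one_mulVec, dotProduct_smul, hs2]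
  simp only [sub_zero, sub_mulVec, smul_mulVec, one_mulVec, dotProduct_sub, dotProduct_smul, smul_eq_mul]
  rw [hone, hs1, hww]
  have hAβ : β ⬝ᵥ (A *ᵥ β) = (1 + 1 / g) * (β ⬝ᵥ ((Xᵀ * X) *ᵥ β)) := by
    rw [hA, smul_mulVec, dotProduct_smul, smul_eq_mul]
  rw [hAβ, mul_inv]
  field_simp
  ring

/-- Closed-form marginal density of the latent Gaussian regression after
integrating out the intercept `α` (flat prior), coefficients `β` (g-prior) and
variance `σ²` (Jeffreys prior `σ⁻²`). -/
theorem latent_gaussian_marginal_closed_form (n p : ℕ) (hn : 2 ≤ n)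
    (g : ℝ) (hg : 0 < g) (X : Matrix (Fin n) (Fin p) ℝ)
    (hcent : Xᵀ *ᵥ (fun _ => (1 : ℝ)) = 0)
    (hrank : (Matrix.of fun i => Fin.cons (1 : ℝ) (fun j => X i j)
        : Matrix (Fin n) (Fin (p + 1)) ℝ).rank = p + 1)
    (A : Matrix (Fin p) (Fin p) ℝ) (hA : A = (1 + 1 / g) • (Xᵀ * X))
    (P : Matrix (Fin n) (Fin n) ℝ)
    (hP : P = 1 - (n : ℝ)⁻¹ • (Matrix.of fun _ _ => (1 : ℝ)) - X * A⁻¹ * Xᵀ)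
    (z : Fin n → ℝ) (hz : 0 < z ⬝ᵥ (P *ᵥ z)) :
    (∫ s in Set.Ioi (0 : ℝ), ∫ β : Fin p → ℝ, ∫ α : ℝ,
        gaussPdf (fun i => α + (X *ᵥ β) i) (s • (1 : Matrix (Fin n) (Fin n) ℝ)) z *
          gaussPdf (0 : Fin p → ℝ) ((g * s) • (Xᵀ * X)⁻¹) β * s⁻¹) =
      Real.Gamma (((n : ℝ) - 1) / 2) /
          (Real.pi ^ (((n : ℝ) - 1) / 2) * Real.sqrt n) *
        g ^ (-(p : ℝ) / 2) * (Xᵀ * X).det ^ ((1 : ℝ) / 2) *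
        A.det ^ (-(1 : ℝ) / 2) * (z ⬝ᵥ (P *ᵥ z)) ^ (-((n : ℝ) - 1) / 2) := by
  have hG := aux_posdef X hrank
  have hn0 : 0 < n := by omega
  have hnR : (0:ℝ) < n := by exact_mod_cast hn0
  have hAp : A.PosDef := by
    rw [hA]; exact hG.smul (by positivity)
  have hexp := aux_exponent hn0 g hg X hcent hG A hA P hP z
  set Q := z ⬝ᵥ (P *ᵥ z) with hQ
  set b := A⁻¹ *ᵥ (Xᵀ *ᵥ z) with hb
  set m := (n : ℝ)⁻¹ * ∑ i, z i with hm
  have hdG : 0 < (Xᵀ * X).det := hG.det_pos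
  set d := (Xᵀ * X).det with hd
  set a := ((n : ℝ) - 1) / 2 with ha
  have ha0 : 0 < a := by
    have : (2:ℝ) ≤ n := by exact_mod_cast hn
    rw [ha]; linarith
  set K := (2 * π) ^ (-a) * g ^ (-(p : ℝ) / 2) * d ^ ((1 : ℝ) / 2) * A.det ^ (-(1 : ℝ) / 2) / √n with hK
  have hstep : ∀ s ∈ Set.Ioi (0:ℝ), (∫ β : Fin p → ℝ, ∫ α : ℝ,
        gaussPdf (fun i => α + (X *ᵥ β) i) (s • (1 : Matrix (Fin n) (Fin n) ℝ)) z *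
          gaussPdf (0 : Fin p → ℝ) ((g * s) • (Xᵀ * X)⁻¹) β * s⁻¹) =
      K * (s ^ (-a - 1) * Real.exp (-(Q / 2 / s))) := by
    intro s hs
    have hs : 0 < s := hs
    have hpt : ∀ (β : Fin p → ℝ) (α : ℝ),
        gaussPdf (fun i => α + (X *ᵥ β) i) (s • (1 : Matrix (Fin n) (Fin n) ℝ)) z *
          gaussPdf (0 : Fin p → ℝ) ((g * s) • (Xᵀ * X)⁻¹) β * s⁻¹ =
        Real.exp (-(n / (2 * s)) * (α - m) ^ 2) *
          (Real.exp (-(1 / (2 * s)) * ((β - b) ⬝ᵥ (A *ᵥ (β - b)))) *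
          ((2 * π) ^ (-(n : ℝ) / 2) * (s ^ n) ^ (-(1 : ℝ) / 2) *
            ((2 * π) ^ (-(p : ℝ) / 2) * ((g * s) ^ p * d⁻¹) ^ (-(1 : ℝ) / 2)) * s⁻¹ *
            Real.exp (-(Q / 2 / s)))) := by
      intro β α
      have e : Real.exp (-(n / (2 * s)) * (α - m) ^ 2) *
          Real.exp (-(1 / (2 * s)) * ((β - b) ⬝ᵥ (A *ᵥ (β - b)))) * Real.exp (-(Q / 2 / s)) =
          Real.exp (-(1 / 2) * ((z - fun i => α + (X *ᵥ β) i) ⬝ᵥ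
        ((s • (1 : Matrix (Fin n) (Fin n) ℝ))⁻¹ *ᵥ (z - fun i => α + (X *ᵥ β) i)))) *
          Real.exp (-(1 / 2) * ((β - 0) ⬝ᵥ (((g * s) • (Xᵀ * X)⁻¹)⁻¹ *ᵥ (β - 0)))) := by
        rw [← Real.exp_add, ← Real.exp_add, ← Real.exp_add, ← mul_add, hexp s hs β α]
        congr 1
        field_simp
        ring
      have hd1 : (s • (1 : Matrix (Fin n) (Fin n) ℝ)).det = s ^ n := by simp
      have hd2 : ((g * s) • (Xᵀ * X)⁻¹).det = (g * s) ^ p * d⁻¹ := by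
        rw [det_smul, det_nonsing_inv, Ring.inverse_eq_inv', Fintype.card_fin]
      unfold gaussPdf
      rw [hd1, hd2]
      linear_combination (-((2 * π) ^ (-(n : ℝ) / 2) * (s ^ n) ^ (-(1 : ℝ) / 2) *
            ((2 * π) ^ (-(p : ℝ) / 2) * ((g * s) ^ p * d⁻¹) ^ (-(1 : ℝ) / 2)) * s⁻¹)) * e
    simp_rw [hpt, aux_alpha]
    rw [integral_const_mul, integral_mul_const,
      integral_sub_right_eq_self (fun β : Fin p → ℝ => Real.exp (-(1 / (2 * s)) * (β ⬝ᵥ (A *ᵥ β)))) b,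
      aux_gauss A hAp _ (by positivity)]
    have e1 : (s ^ n) ^ (-(1 : ℝ) / 2) = s ^ (-(n : ℝ) / 2) := by
      rw [← Real.rpow_natCast, ← Real.rpow_mul hs.le]; congr 1; ring
    have e2 : ((g * s) ^ p * d⁻¹) ^ (-(1 : ℝ) / 2) =
        g ^ (-(p : ℝ) / 2) * s ^ (-(p : ℝ) / 2) * d ^ ((1 : ℝ) / 2) := by
      rw [Real.mul_rpow (by positivity) (by positivity), ← Real.rpow_natCast,
        ← Real.rpow_mul (by positivity), Real.mul_rpow hg.le hs.le, Real.inv_rpow hdG.le,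
        ← Real.rpow_neg hdG.le]
      congr 3 <;> ring_nf
    have e3 : √(π / (n / (2 * s))) = (2 * π) ^ ((1:ℝ) / 2) * s ^ ((1:ℝ) / 2) / √n := by
      rw [← Real.mul_rpow (by positivity) hs.le, ← Real.sqrt_eq_rpow, ← Real.sqrt_div (by positivity)]
      congr 1; field_simp
    have e4 : (π / (1 / (2 * s))) ^ ((p : ℝ) / 2) = (2 * π) ^ ((p : ℝ) / 2) * s ^ ((p : ℝ) / 2) := by
      rw [← Real.mul_rpow (by positivity) hs.le]
      congr 1; field_simp
    have e5 : ∀ x : ℝ, 0 < x → x ^ ((1:ℝ) / 2) * x ^ ((p : ℝ) / 2) * x ^ (-(n : ℝ) / 2) * x ^ (-(p : ℝ) / 2)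
        = x ^ (-a) := by
      intro x hx
      rw [← Real.rpow_add hx, ← Real.rpow_add hx, ← Real.rpow_add hx]
      congr 1; rw [ha]; ring
    have e6 : s ^ (-a - 1) = s ^ (-a) * s⁻¹ := by
      rw [sub_eq_add_neg, Real.rpow_add hs, Real.rpow_neg_one]
    rw [e1, e2, e3, e4, hK, e6, ← e5 s hs, ← e5 (2 * π) (by positivity)]
    ring
  rw [setIntegral_congr_fun measurableSet_Ioi hstep, integral_const_mul,
    aux_invgamma a (Q / 2) ha0 (by positivity), hK]
  have e7 : -((n : ℝ) - 1) / 2 = -a := by rw [ha]; ring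
  rw [e7, Real.div_rpow hz.le (by norm_num), Real.mul_rpow (by norm_num) pi_pos.le,
    Real.rpow_neg pi_pos.le]
  have h2 : (0:ℝ) < 2 ^ (-a) := by positivity
  have h3 : 0 < π ^ a := by positivity
  field_simp
end

section
/- Let y_L ∈ ℝ, y ∈ ℝ^n, and let N = { i : y_i > y_L } and C = { i : y_i = y_L } partition {1, …, n} (assume y_i ≥ y_L for all i). Let X ∈ ℝ^{n×p} with rows x_iᵀ be such that Xᵀι = 0 and (ι : X) has full column rank, and let g > 0. Assume |N| ≥ 2 and that the uncensored values (y_i)_{i∈N} are not all equal. Then the Tobit marginal likelihood is finite: ∫_0^∞ ∫_{ℝ^p} ∫_ℝ ∫_{(−∞, y_L]^{|C|}} ∏_{i∈N} (2πσ²)^{−1/2} exp( −(y_i − α − x_iᵀβ)²/(2σ²) ) · ∏_{i∈C} (2πσ²)^{−1/2} exp( −(z_i − α − x_iᵀβ)²/(2σ²) ) · N_p(β; 0, g σ² (XᵀX)^{-1}) · σ^{-2} dz_C dα dβ d(σ²) < ∞, where z_C = (z_i)_{i∈C}. -/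
open MeasureTheory Matrix Real

/-- univariate Gaussian density with variance `s` evaluated at `t`. -/
noncomputable def nd (s t : ℝ) : ℝ :=
  (2 * Real.pi * s) ^ (-(1 : ℝ) / 2) * Real.exp (-t ^ 2 / (2 * s))

lemma gauss_pi {ι : Type*} [Fintype ι] (b : ℝ) (hb : 0 < b) (m : ι → ℝ) :
    ∫⁻ x : ι → ℝ, ENNReal.ofReal (∏ i, Real.exp (-b * (x i - m i) ^ 2)) =
      ENNReal.ofReal (√(π / b) ^ Fintype.card ι) := by
  have hi : ∀ i, Integrable (fun x : ℝ => Real.exp (-b * (x - m i) ^ 2)) := fun i =>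
    (integrable_exp_neg_mul_sq hb).comp_sub_right (m i)
  rw [← ofReal_integral_eq_lintegral_ofReal]
  · rw [integral_fintype_prod_volume_eq_prod (fun i (x : ℝ) => Real.exp (-b * (x - m i) ^ 2))]
    congr 1
    have : ∀ i, ∫ x : ℝ, Real.exp (-b * (x - m i) ^ 2) = √(π / b) := fun i => by
      rw [integral_sub_right_eq_self (fun x : ℝ => Real.exp (-b * x ^ 2)) (m i)]
      exact integral_gaussian b
    simp only [this, Finset.prod_const, Finset.card_univ]
  · exact Integrable.fintype_prod (f := fun i (x : ℝ) => Real.exp (-b * (x - m i) ^ 2)) hi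
  · exact Filter.Eventually.of_forall fun x => Finset.prod_nonneg fun i _ => (Real.exp_pos _).le

lemma gauss_line (b : ℝ) (hb : 0 < b) (m : ℝ) :
    ∫⁻ x : ℝ, ENNReal.ofReal (Real.exp (-b * (x - m) ^ 2)) = ENNReal.ofReal (√(π / b)) := by
  have hi : Integrable (fun x : ℝ => Real.exp (-b * (x - m) ^ 2)) :=
    (integrable_exp_neg_mul_sq hb).comp_sub_right m
  rw [← ofReal_integral_eq_lintegral_ofReal hi
    (Filter.Eventually.of_forall fun x => (Real.exp_pos _).le),
    integral_sub_right_eq_self (fun x : ℝ => Real.exp (-b * x ^ 2)) m, integral_gaussian b]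

lemma nd_eq (s t : ℝ) :
    nd s t = (2 * π * s) ^ (-(1 : ℝ) / 2) * Real.exp (-(1 / (2 * s)) * t ^ 2) := by
  unfold nd; congr 2; ring

lemma nd_nonneg (s t : ℝ) (hs : 0 < s) : 0 ≤ nd s t := by unfold nd; positivity

lemma cens_bound {ι : Type*} [Fintype ι] (S : Set (ι → ℝ)) (s : ℝ) (hs : 0 < s) (c : ι → ℝ)
    (A B D : ℝ) (hA : 0 ≤ A) (hB : 0 ≤ B) (hD : 0 ≤ D) :
    ∫⁻ z in S, ENNReal.ofReal (A * (∏ i, nd s (z i - c i)) * B * D) ≤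
      ENNReal.ofReal (A * B * D) := by
  have e : ∀ z : ι → ℝ, ENNReal.ofReal (A * (∏ i, nd s (z i - c i)) * B * D) =
      ENNReal.ofReal (A * B * D * ((2 * π * s) ^ (-(1 : ℝ) / 2)) ^ Fintype.card ι) *
        ENNReal.ofReal (∏ i, Real.exp (-(1 / (2 * s)) * (z i - c i) ^ 2)) := fun z => by
    rw [← ENNReal.ofReal_mul (by positivity)]
    simp only [nd_eq, Finset.prod_mul_distrib, Finset.prod_const, Finset.card_univ]
    congr 1; ring
  refine (setLIntegral_le_lintegral _ _).trans ?_
  simp only [e]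
  rw [lintegral_const_mul' _ _ ENNReal.ofReal_ne_top, gauss_pi _ (by positivity),
    ← ENNReal.ofReal_mul (by positivity)]
  apply le_of_eq
  congr 1
  rw [mul_assoc, ← mul_pow]
  have : (2 * π * s) ^ (-(1 : ℝ) / 2) * √(π / (1 / (2 * s))) = 1 := by
    rw [Real.sqrt_eq_rpow, show π / (1 / (2 * s)) = 2 * π * s by field_simp,
      ← Real.rpow_add (by positivity)]
    norm_num
  rw [this]; simp

lemma invgamma_fin (r c K : ℝ) (hr : 0 < r) (hc : 0 < c) :
    ∫⁻ s in Set.Ioi (0 : ℝ), ENNReal.ofReal (K * (s ^ (-r - 1) * Real.exp (-c / s))) < ⊤ := by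
  have h1 := integrableOn_rpow_mul_exp_neg_mul_rpow (s := r - 1) (p := 1) (b := c)
    (by linarith) one_pos hc
  have h2 := (integrableOn_Ioi_comp_rpow_iff' _ (p := -1) (by norm_num)).mpr h1
  have h3 : IntegrableOn (fun s : ℝ => s ^ (-r - 1) * Real.exp (-c / s)) (Set.Ioi 0) := by
    refine h2.congr_fun (fun x hx => ?_) measurableSet_Ioi
    have hx : 0 < x := hx
    simp only [smul_eq_mul, Real.rpow_one]
    rw [← mul_assoc, ← Real.rpow_mul hx.le, ← Real.rpow_add hx, Real.rpow_neg_one]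
    congr 2
    ring
  exact (h3.const_mul K).lintegral_lt_top

lemma inj_of_rank (n p : ℕ) (X : Matrix (Fin n) (Fin p) ℝ)
    (hrank : (Matrix.of fun i => Fin.cons (1 : ℝ) (fun j => X i j)
        : Matrix (Fin n) (Fin (p + 1)) ℝ).rank = p + 1) :
    Function.Injective X.mulVec := by
  set M : Matrix (Fin n) (Fin (p + 1)) ℝ :=
    Matrix.of fun i => Fin.cons (1 : ℝ) (fun j => X i j) with hM
  have hk : LinearMap.ker M.mulVecLin = ⊥ := by
    have h := LinearMap.finrank_range_add_finrank_ker M.mulVecLin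
    have h' : Module.finrank ℝ (LinearMap.range M.mulVecLin) = p + 1 := hrank
    rw [h'] at h
    simp at h
    simpa using h
  have hinj : Function.Injective M.mulVecLin := LinearMap.ker_eq_bot.mp hk
  intro a b hab
  have : M.mulVecLin (Fin.cons 0 a) = M.mulVecLin (Fin.cons 0 b) := by
    ext i
    have := congrFun hab i
    simp only [Matrix.mulVec, dotProduct] at this
    simp [hM, Matrix.mulVec, dotProduct, Fin.sum_univ_succ, this]
  have h2 := hinj this
  ext j
  have := congrFun h2 j.succ
  simpa using this

lemma sq_bound (n p : ℕ) (X : Matrix (Fin n) (Fin p) ℝ) (h : Function.Injective X.mulVec) :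
    ∃ L > 0, ∀ β : Fin p → ℝ, ∑ j, β j ^ 2 ≤ L * ∑ k, (X *ᵥ β) k ^ 2 := by
  obtain ⟨K, hK, hA⟩ := LinearMap.exists_antilipschitzWith X.mulVecLin
    (LinearMap.ker_eq_bot.mpr h)
  refine ⟨(p + 1) * K ^ 2, by positivity, fun β => ?_⟩
  have h1 : ‖β‖ ≤ K * ‖X *ᵥ β‖ := by
    have := hA.le_mul_dist β 0
    simpa [dist_eq_norm] using this
  have h2 : ‖X *ᵥ β‖ ≤ √(∑ k, (X *ᵥ β) k ^ 2) := by
    rw [pi_norm_le_iff_of_nonneg (Real.sqrt_nonneg _)]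
    intro k
    rw [Real.norm_eq_abs, ← Real.sqrt_sq_eq_abs]
    exact Real.sqrt_le_sqrt (Finset.single_le_sum (f := fun k => (X *ᵥ β) k ^ 2)
      (fun _ _ => sq_nonneg _) (Finset.mem_univ k))
  have h0 : 0 ≤ ∑ k, (X *ᵥ β) k ^ 2 := Finset.sum_nonneg fun _ _ => sq_nonneg _
  have h3 : ‖β‖ ^ 2 ≤ K ^ 2 * ∑ k, (X *ᵥ β) k ^ 2 := by
    calc ‖β‖ ^ 2 ≤ (K * √(∑ k, (X *ᵥ β) k ^ 2)) ^ 2 := by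
          gcongr
          exact h1.trans (by gcongr)
      _ = _ := by rw [mul_pow, Real.sq_sqrt h0]
  have h4 : ∑ j, β j ^ 2 ≤ p * ‖β‖ ^ 2 := by
    calc ∑ j, β j ^ 2 ≤ ∑ j : Fin p, ‖β‖ ^ 2 := by
          refine Finset.sum_le_sum fun j _ => ?_
          rw [← sq_abs]
          gcongr
          exact norm_le_pi_norm β j
      _ = _ := by simp
  nlinarith [sq_nonneg ‖β‖]

lemma key_quad (g d w q : ℝ) (hg : 0 < g) (hw : w ^ 2 ≤ 4 * q) :
    d ^ 2 / (4 * (4 * g + 1)) + q / (4 * g) ≤ (d - w) ^ 2 / 4 + q / (2 * g) := by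
  have h1 : w ^ 2 / (16 * g) ≤ q / (4 * g) := by
    rw [div_le_div_iff₀ (by positivity) (by positivity)]
    nlinarith
  have h2 : (d - w) ^ 2 / 4 + w ^ 2 / (16 * g) - d ^ 2 / (4 * (4 * g + 1)) =
      (4 * g + 1) / (16 * g) * (w - 4 * g * d / (4 * g + 1)) ^ 2 := by
    field_simp; ring
  have h3 : 0 ≤ (4 * g + 1) / (16 * g) * (w - 4 * g * d / (4 * g + 1)) ^ 2 := by positivity
  have h4 : q / (2 * g) = q / (4 * g) + q / (4 * g) := by field_simp; ring
  linarith

lemma det_pos_of_inj (n p : ℕ) (X : Matrix (Fin n) (Fin p) ℝ)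
    (h : Function.Injective X.mulVec) : 0 < (Xᵀ * X).det := by
  have := Matrix.PosDef.conjTranspose_mul_self X h
  rw [Matrix.conjTranspose_eq_transpose_of_trivial] at this
  exact this.det_pos

lemma gaussPdf_eq (n p : ℕ) (X : Matrix (Fin n) (Fin p) ℝ)
    (h : Function.Injective X.mulVec) (t : ℝ) (ht : 0 < t) (β : Fin p → ℝ) :
    gaussPdf (0 : Fin p → ℝ) (t • (Xᵀ * X)⁻¹) β =
      (2 * π) ^ (-(p : ℝ) / 2) * ((Xᵀ * X)⁻¹.det ^ (-(1 : ℝ) / 2) * t ^ (-(p : ℝ) / 2)) *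
        Real.exp (-(∑ k, (X *ᵥ β) k ^ 2) / (2 * t)) := by
  have hd := det_pos_of_inj n p X h
  have hu : IsUnit (Xᵀ * X).det := hd.ne'.isUnit
  have hdi : 0 < (Xᵀ * X)⁻¹.det := by
    rw [Matrix.det_nonsing_inv, Ring.inverse_eq_inv']; positivity
  have hinv : (t • (Xᵀ * X)⁻¹)⁻¹ = t⁻¹ • (Xᵀ * X) := by
    apply Matrix.inv_eq_left_inv
    rw [Matrix.smul_mul, Matrix.mul_smul, smul_smul, inv_mul_cancel₀ ht.ne', one_smul,
      Matrix.mul_nonsing_inv _ hu]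
  have hq : β ⬝ᵥ ((Xᵀ * X) *ᵥ β) = ∑ k, (X *ᵥ β) k ^ 2 := by
    rw [← Matrix.mulVec_mulVec, Matrix.dotProduct_mulVec, Matrix.vecMul_transpose]
    simp [dotProduct, sq]
  unfold gaussPdf
  rw [hinv, sub_zero, Matrix.smul_mulVec, dotProduct_smul, hq, Matrix.det_smul, Fintype.card_fin,
    Real.mul_rpow (by positivity) hdi.le, ← Real.rpow_natCast, ← Real.rpow_mul ht.le, smul_eq_mul]
  rw [mul_comm (t ^ _)]
  congr 2
  · congr 2; ring
  · field_simp

/-- Posterior existence for the left-censored Tobit type I regression model under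
the improper prior `p(α, σ²) ∝ σ⁻²` and the g-prior on `β`: if there are at least
two uncensored observations and the uncensored values are not all equal, the
marginal likelihood is finite. -/
theorem tobit_posterior_exists (n p : ℕ) (yL : ℝ) (y : Fin n → ℝ)
    (hy : ∀ i, yL ≤ y i)
    (X : Matrix (Fin n) (Fin p) ℝ)
    (hcent : Xᵀ *ᵥ (fun _ => (1 : ℝ)) = 0)
    (hrank : (Matrix.of fun i => Fin.cons (1 : ℝ) (fun j => X i j)
        : Matrix (Fin n) (Fin (p + 1)) ℝ).rank = p + 1)
    (g : ℝ) (hg : 0 < g)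
    (hN : 2 ≤ Fintype.card {i // yL < y i})
    (hne : ∃ i j : {i // yL < y i}, y i.1 ≠ y j.1) :
    (∫⁻ s in Set.Ioi (0 : ℝ), ∫⁻ β : Fin p → ℝ, ∫⁻ α : ℝ,
        ∫⁻ zc in (Set.univ.pi fun _ : {i // y i = yL} => Set.Iic yL),
          ENNReal.ofReal
            ((∏ i : {i // yL < y i}, nd s (y i.1 - α - (X *ᵥ β) i.1)) *
              (∏ i : {i // y i = yL}, nd s (zc i - α - (X *ᵥ β) i.1)) *
              gaussPdf (0 : Fin p → ℝ) ((g * s) • (Xᵀ * X)⁻¹) β * s⁻¹)) < ⊤ := by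
  have hinj := inj_of_rank n p X hrank
  obtain ⟨L, hL, hLb⟩ := sq_bound n p X hinj
  obtain ⟨a, b, hab⟩ := hne
  have hdi : 0 < (Xᵀ * X)⁻¹.det := by
    have := det_pos_of_inj n p X hinj
    rw [Matrix.det_nonsing_inv, Ring.inverse_eq_inv']; positivity
  set d : ℝ := y a.1 - y b.1 with hd
  have hd0 : d ≠ 0 := sub_ne_zero.mpr hab
  set c : ℝ := d ^ 2 / (4 * (4 * g + 1)) with hc
  have hcpos : 0 < c := by positivity
  set l : ℝ := 1 / (4 * g * L) with hl
  have hlpos : 0 < l := by positivity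
  set m : ℕ := Fintype.card {i // yL < y i} with hm
  set E : ℝ := (Xᵀ * X)⁻¹.det ^ (-(1 : ℝ) / 2) with hE
  have hEpos : 0 < E := by positivity
  set G : ℝ → ℝ := fun s => ((2 * π * s) ^ (-(1 : ℝ) / 2)) ^ m *
    ((2 * π) ^ (-(p : ℝ) / 2) * (E * (g * s) ^ (-(p : ℝ) / 2))) * s⁻¹ * Real.exp (-c / s) with hG
  have hGpos : ∀ s, 0 < s → 0 ≤ G s := fun s hs => by simp only [hG]; positivity
  set mid : (Fin p → ℝ) → ℝ := fun β =>
    ((y a.1 - (X *ᵥ β) a.1) + (y b.1 - (X *ᵥ β) b.1)) / 2 with hmid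
  -- pointwise bound
  have hpt : ∀ s, 0 < s → ∀ (β : Fin p → ℝ) (α : ℝ),
      (∏ i : {i // yL < y i}, nd s (y i.1 - α - (X *ᵥ β) i.1)) *
        gaussPdf (0 : Fin p → ℝ) ((g * s) • (Xᵀ * X)⁻¹) β * s⁻¹ ≤
      G s * (∏ j, Real.exp (-(l / s) * (β j - 0) ^ 2)) *
        Real.exp (-(1 / s) * (α - mid β) ^ 2) := by
    intro s hs β α
    rw [gaussPdf_eq n p X hinj _ (by positivity)]
    simp only [nd_eq, Finset.prod_mul_distrib, Finset.prod_const, Finset.card_univ, hG,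
      ← Real.exp_sum, sub_zero, ← Finset.mul_sum]
    rw [← hm, ← hE]
    set q : ℝ := ∑ k, (X *ᵥ β) k ^ 2 with hq
    set T : ℝ := ∑ i : {i // yL < y i}, (y i.1 - α - (X *ᵥ β) i.1) ^ 2 with hT
    have hTab : (y a.1 - α - (X *ᵥ β) a.1) ^ 2 + (y b.1 - α - (X *ᵥ β) b.1) ^ 2 ≤ T := by
      have hne : a ≠ b := fun h => hab (by rw [h])
      rw [← Finset.sum_pair (f := fun i : {i // yL < y i} =>
        (y i.1 - α - (X *ᵥ β) i.1) ^ 2) hne]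
      exact Finset.sum_le_sum_of_subset_of_nonneg (Finset.subset_univ _)
        fun _ _ _ => sq_nonneg _
    have hq1 : ∀ k, (X *ᵥ β) k ^ 2 ≤ q := fun k =>
      Finset.single_le_sum (f := fun k => (X *ᵥ β) k ^ 2)
        (fun _ _ => sq_nonneg _) (Finset.mem_univ k)
    have hw : ((X *ᵥ β) a.1 - (X *ᵥ β) b.1) ^ 2 ≤ 4 * q := by
      nlinarith [hq1 a.1, hq1 b.1, sq_nonneg ((X *ᵥ β) a.1 + (X *ᵥ β) b.1)]
    have hkey := key_quad g d _ q hg hw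
    have hlb : l * ∑ j, β j ^ 2 ≤ q / (4 * g) := by
      calc l * ∑ j, β j ^ 2 ≤ l * (L * q) := by gcongr; exact hLb β
        _ = q / (4 * g) := by rw [hl]; field_simp
    have hexp : -(1 / (2 * s)) * T + -q / (2 * (g * s)) ≤
        -c / s + -(l / s) * ∑ j, β j ^ 2 + -(1 / s) * (α - mid β) ^ 2 := by
      have e1 : -(1 / (2 * s)) * T + -q / (2 * (g * s)) = -(T / 2 + q / (2 * g)) / s := by
        field_simp; ring
      have e2 : -c / s + -(l / s) * ∑ j, β j ^ 2 + -(1 / s) * (α - mid β) ^ 2 =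
          -(c + l * ∑ j, β j ^ 2 + (α - mid β) ^ 2) / s := by
        field_simp; ring
      rw [e1, e2]
      refine div_le_div_of_nonneg_right (neg_le_neg ?_) hs.le
      have e3 : ((y a.1 - α - (X *ᵥ β) a.1) ^ 2 + (y b.1 - α - (X *ᵥ β) b.1) ^ 2) / 2 =
          (d - ((X *ᵥ β) a.1 - (X *ᵥ β) b.1)) ^ 2 / 4 + (α - mid β) ^ 2 := by
        simp only [hmid, hd]; ring
      linarith
    have hexp' := Real.exp_le_exp.mpr hexp
    rw [Real.exp_add, Real.exp_add, Real.exp_add] at hexp'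
    set P : ℝ := ((2 * π * s) ^ (-(1 : ℝ) / 2)) ^ m *
      ((2 * π) ^ (-(p : ℝ) / 2) * (E * (g * s) ^ (-(p : ℝ) / 2))) * s⁻¹ with hP
    have hP0 : 0 ≤ P := by positivity
    have := mul_le_mul_of_nonneg_left hexp' hP0
    calc _ = P * (Real.exp (-(1 / (2 * s)) * T) * Real.exp (-q / (2 * (g * s)))) := by
          rw [hP]; ring
      _ ≤ _ := this
      _ = _ := by ring
  -- iterated integrals for fixed s
  have hs_bound : ∀ s ∈ Set.Ioi (0 : ℝ), (∫⁻ β : Fin p → ℝ, ∫⁻ α : ℝ,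
        ∫⁻ zc in (Set.univ.pi fun _ : {i // y i = yL} => Set.Iic yL),
          ENNReal.ofReal
            ((∏ i : {i // yL < y i}, nd s (y i.1 - α - (X *ᵥ β) i.1)) *
              (∏ i : {i // y i = yL}, nd s (zc i - α - (X *ᵥ β) i.1)) *
              gaussPdf (0 : Fin p → ℝ) ((g * s) • (Xᵀ * X)⁻¹) β * s⁻¹)) ≤
      ENNReal.ofReal (G s * √(π / (1 / s)) * √(π / (l / s)) ^ p) := by
    intro s hs
    have hs : 0 < s := hs
    have hα : ∀ β : Fin p → ℝ, (∫⁻ α : ℝ,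
        ∫⁻ zc in (Set.univ.pi fun _ : {i // y i = yL} => Set.Iic yL),
          ENNReal.ofReal
            ((∏ i : {i // yL < y i}, nd s (y i.1 - α - (X *ᵥ β) i.1)) *
              (∏ i : {i // y i = yL}, nd s (zc i - α - (X *ᵥ β) i.1)) *
              gaussPdf (0 : Fin p → ℝ) ((g * s) • (Xᵀ * X)⁻¹) β * s⁻¹)) ≤
        ENNReal.ofReal (G s * √(π / (1 / s))) *
          ENNReal.ofReal (∏ j, Real.exp (-(l / s) * (β j - 0) ^ 2)) := by
      intro β
      have hB : 0 ≤ ∏ j, Real.exp (-(l / s) * (β j - 0) ^ 2) :=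
        Finset.prod_nonneg fun _ _ => (Real.exp_pos _).le
      calc _ ≤ ∫⁻ α : ℝ, ENNReal.ofReal
              (G s * (∏ j, Real.exp (-(l / s) * (β j - 0) ^ 2))) *
              ENNReal.ofReal (Real.exp (-(1 / s) * (α - mid β) ^ 2)) := by
            refine lintegral_mono fun α => ?_
            simp only [sub_sub _ α _]
            refine (cens_bound _ s hs _ _ _ _
              (Finset.prod_nonneg fun _ _ => nd_nonneg _ _ hs) ?_ (by positivity)).trans ?_
            · rw [gaussPdf_eq n p X hinj _ (by positivity)]
              positivity
            · rw [← ENNReal.ofReal_mul (mul_nonneg (hGpos s hs) hB)]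
              apply ENNReal.ofReal_le_ofReal
              have := hpt s hs β α
              simp only [sub_sub _ α _] at this
              exact this
        _ = _ := by
            rw [lintegral_const_mul' _ _ ENNReal.ofReal_ne_top, gauss_line _ (by positivity),
              ← ENNReal.ofReal_mul (mul_nonneg (hGpos s hs) hB),
              ← ENNReal.ofReal_mul (mul_nonneg (hGpos s hs) (Real.sqrt_nonneg _))]
            congr 1; ring
    refine (lintegral_mono hα).trans ?_
    rw [lintegral_const_mul' _ _ ENNReal.ofReal_ne_top,
      gauss_pi (l / s) (by positivity) (fun _ : Fin p => (0 : ℝ)), Fintype.card_fin,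
      ← ENNReal.ofReal_mul (mul_nonneg (hGpos s hs) (Real.sqrt_nonneg _))]
  refine (setLIntegral_mono' measurableSet_Ioi hs_bound).trans_lt ?_
  set K : ℝ := ((2 * π) ^ (-(1 : ℝ) / 2)) ^ m * ((2 * π) ^ (-(p : ℝ) / 2) *
    (E * g ^ (-(p : ℝ) / 2))) * √π * √(π / l) ^ p with hK
  have hm1 : (2 : ℝ) ≤ m := by exact_mod_cast hN
  refine lt_of_eq_of_lt ?_ (invgamma_fin (((m : ℝ) - 1) / 2) c K (by linarith) hcpos)
  refine setLIntegral_congr_fun measurableSet_Ioi fun s hs => ?_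
  have hs : 0 < s := hs
  simp only [hG]
  congr 1
  have r1 : ((2 * π * s) ^ (-(1 : ℝ) / 2)) ^ m =
      ((2 * π) ^ (-(1 : ℝ) / 2)) ^ m * s ^ (-(m : ℝ) / 2) := by
    rw [Real.mul_rpow (by positivity) hs.le, mul_pow]
    congr 1
    rw [← Real.rpow_natCast, ← Real.rpow_mul hs.le]
    congr 1; ring
  have r2 : (g * s) ^ (-(p : ℝ) / 2) = g ^ (-(p : ℝ) / 2) * s ^ (-(p : ℝ) / 2) :=
    Real.mul_rpow hg.le hs.le
  have r3 : √(π / (1 / s)) = √π * s ^ ((1 : ℝ) / 2) := by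
    rw [← Real.sqrt_eq_rpow, ← Real.sqrt_mul (by positivity)]
    congr 1; field_simp
  have r4 : √(π / (l / s)) ^ p = √(π / l) ^ p * s ^ ((p : ℝ) / 2) := by
    rw [show π / (l / s) = π / l * s by field_simp, Real.sqrt_mul (by positivity), mul_pow]
    congr 1
    rw [Real.sqrt_eq_rpow, ← Real.rpow_natCast, ← Real.rpow_mul hs.le]
    congr 1; ring
  have r5 : s ^ (-(((m : ℝ) - 1) / 2) - 1) = s ^ (-(m : ℝ) / 2) * s ^ (-(p : ℝ) / 2) * s⁻¹ *
      s ^ ((1 : ℝ) / 2) * s ^ ((p : ℝ) / 2) := by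
    rw [← Real.rpow_neg_one s, ← Real.rpow_add hs, ← Real.rpow_add hs, ← Real.rpow_add hs,
      ← Real.rpow_add hs]
    congr 1; ring
  rw [r1, r2, r3, r4, r5, hK]
  ring
end

section
/- Let y ∈ ℕ₀^n and for each i define the interval I_i = (−∞, 0) if y_i = 0 and I_i = [log y_i, log(y_i + 1)) if y_i ≥ 1. Let X ∈ ℝ^{n×p} with rows x_iᵀ be such that Xᵀι = 0 and (ι : X) has full column rank, and let g > 0. Assume there exist indices i ≠ j with 0 < y_i < y_j (two distinct positive counts). Then the STAR marginal likelihood is finite: ∫_0^∞ ∫_{ℝ^p} ∫_ℝ ∫_{I_1 × ⋯ × I_n} ∏_{i=1}^n (2πσ²)^{−1/2} exp( −(z_i − α − x_iᵀβ)²/(2σ²) ) · N_p(β; 0, g σ² (XᵀX)^{-1}) · σ^{-2} dz dα dβ d(σ²) < ∞. -/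
open MeasureTheory Matrix Real

namespace StarAux

theorem pi_lint {n : ℕ} (μ : Fin n → Measure ℝ) [∀ i, SigmaFinite (μ i)] (f : Fin n → ℝ → ℝ)
    (hf : ∀ i, Integrable (f i) (μ i)) (h0 : ∀ i x, 0 ≤ f i x) :
    ∫⁻ z : Fin n → ℝ, ENNReal.ofReal (∏ i, f i (z i)) ∂(Measure.pi μ)
      = ∏ i, ∫⁻ x, ENNReal.ofReal (f i x) ∂(μ i) := by
  rw [← ofReal_integral_eq_lintegral_ofReal (Integrable.fintype_prod hf)
    (Filter.Eventually.of_forall fun z => Finset.prod_nonneg fun i _ => h0 i _),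
    integral_fintype_prod_eq_prod, ENNReal.ofReal_prod_of_nonneg
      (fun i _ => integral_nonneg (h0 i))]
  refine Finset.prod_congr rfl fun i _ => ?_
  rw [ofReal_integral_eq_lintegral_ofReal (hf i) (Filter.Eventually.of_forall (h0 i))]

theorem lint_gauss {b : ℝ} (hb : 0 < b) (m : ℝ) :
    ∫⁻ x : ℝ, ENNReal.ofReal (Real.exp (-b * (x - m) ^ 2)) = ENNReal.ofReal (√(π / b)) := by
  rw [lintegral_sub_right_eq_self (fun x => ENNReal.ofReal (Real.exp (-b * x ^ 2))) m,
    ← ofReal_integral_eq_lintegral_ofReal (integrable_exp_neg_mul_sq hb)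
      (Filter.Eventually.of_forall fun x => (Real.exp_pos _).le), integral_gaussian]

theorem nd_eq {s : ℝ} (hs : 0 < s) (z α a : ℝ) :
    nd s (z - α - a) = ProbabilityTheory.gaussianPDFReal (α + a) ⟨s, hs.le⟩ z := by
  unfold nd ProbabilityTheory.gaussianPDFReal
  have h : (2 * π * s) ^ (-(1 : ℝ) / 2) = (√(2 * π * s))⁻¹ := by
    rw [Real.sqrt_eq_rpow, ← Real.rpow_neg (by positivity)]; norm_num
  rw [h]
  simp only [sub_sub]
  rfl

theorem nd_nonneg {s : ℝ} (hs : 0 < s) (t : ℝ) : 0 ≤ nd s t := by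
  unfold nd; positivity

theorem nd_mul {s : ℝ} (hs : 0 < s) (t u : ℝ) :
    nd s t * nd s u = (2 * π * s)⁻¹ * Real.exp (-(t ^ 2 + u ^ 2) / (2 * s)) := by
  unfold nd
  have h : (2 * π * s) ^ (-(1 : ℝ) / 2) * (2 * π * s) ^ (-(1 : ℝ) / 2) = (2 * π * s)⁻¹ := by
    rw [← Real.rpow_add (by positivity), ← Real.rpow_neg_one]; norm_num
  rw [mul_mul_mul_comm, h, ← Real.exp_add]
  congr 2; ring

theorem continuous_nd (s : ℝ) : Continuous (nd s) := by
  unfold nd; fun_prop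

theorem inner_bound {n : ℕ} (I : Fin n → Set ℝ) {s : ℝ} (hs : 0 < s) (α : ℝ) (a : Fin n → ℝ)
    (i j : Fin n) (hij : i ≠ j) (P : ℝ) (hP : 0 ≤ P) :
    ∫⁻ z in (Set.univ.pi I), ENNReal.ofReal ((∏ k, nd s (z k - α - a k)) * P)
      ≤ ENNReal.ofReal P * ∫⁻ w : ℝ × ℝ, ENNReal.ofReal
          (nd s (w.1 - α - a i) * nd s (w.2 - α - a j))
          ∂((volume.restrict (I i)).prod (volume.restrict (I j))) := by
  have hint : ∀ k, Integrable (fun x => nd s (x - α - a k)) (volume.restrict (I k)) := by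
    intro k
    simp only [nd_eq hs]
    exact (ProbabilityTheory.integrable_gaussianPDFReal _ _).restrict
  have hle : ∀ k, ∫⁻ x, ENNReal.ofReal (nd s (x - α - a k)) ∂(volume.restrict (I k)) ≤ 1 := by
    intro k
    refine (setLIntegral_le_lintegral _ _).trans ?_
    simp only [nd_eq hs]
    refine (ProbabilityTheory.lintegral_gaussianPDFReal_eq_one _ ?_).le
    intro h
    exact hs.ne' (congrArg NNReal.toReal h)
  simp only [ENNReal.ofReal_mul' hP]
  rw [lintegral_mul_const' _ _ ENNReal.ofReal_ne_top, mul_comm]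
  gcongr
  rw [volume_pi, Measure.restrict_pi_pi,
    pi_lint _ (fun k x => nd s (x - α - a k)) hint (fun k x => nd_nonneg hs _)]
  simp only [ENNReal.ofReal_mul (nd_nonneg hs _)]
  have hm : ∀ k, Measurable fun x => ENNReal.ofReal (nd s (x - α - a k)) := fun k =>
    ((continuous_nd s).comp (by fun_prop)).measurable.ennreal_ofReal
  rw [lintegral_prod_mul (f := fun x => ENNReal.ofReal (nd s (x - α - a i)))
    (g := fun x => ENNReal.ofReal (nd s (x - α - a j))) (hm i).aemeasurable (hm j).aemeasurable,
    ← Finset.prod_pair (f := fun k => ∫⁻ x, ENNReal.ofReal (nd s (x - α - a k)) ∂(volume.restrict (I k))) hij]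
  exact Finset.prod_le_prod_of_subset_of_le_one' (Finset.subset_univ _) fun k _ _ => hle k

theorem inj {n p : ℕ} (X : Matrix (Fin n) (Fin p) ℝ)
    (hrank : (Matrix.of fun i => Fin.cons (1 : ℝ) (fun j => X i j)
        : Matrix (Fin n) (Fin (p + 1)) ℝ).rank = p + 1) :
    Function.Injective X.mulVec := by
  set Z := (Matrix.of fun i => Fin.cons (1 : ℝ) (fun j => X i j)
        : Matrix (Fin n) (Fin (p + 1)) ℝ) with hZ
  have hk : LinearMap.ker Z.mulVecLin = ⊥ := by
    have := Z.mulVecLin.finrank_range_add_finrank_ker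
    rw [Matrix.rank] at hrank
    rw [hrank] at this
    simp at this
    exact this
  have hinj := LinearMap.ker_eq_bot.mp hk
  intro u v huv
  have h2 : ∀ w : Fin p → ℝ, Z *ᵥ (Fin.cons 0 w) = X *ᵥ w := by
    intro w
    ext i
    simp [Matrix.mulVec, dotProduct, Fin.sum_univ_succ, hZ]
  have : (Fin.cons 0 u : Fin (p+1) → ℝ) = Fin.cons 0 v := by
    apply hinj
    simp only [Matrix.mulVecLin_apply, h2]
    exact huv
  exact (Fin.cons_inj.mp this).2

theorem coercive {n p : ℕ} (X : Matrix (Fin n) (Fin p) ℝ) (h : Function.Injective X.mulVec) :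
    ∃ c > 0, ∀ β, c * ∑ k, β k ^ 2 ≤ ∑ i, (X *ᵥ β) i ^ 2 := by
  obtain ⟨K, hK, hL⟩ := X.mulVecLin.exists_antilipschitzWith (LinearMap.ker_eq_bot.mpr h)
  have hK' : (0 : ℝ) < K := hK
  refine ⟨((p + 1) * (K : ℝ) ^ 2)⁻¹, by positivity, fun β => ?_⟩
  have h1 : ‖β‖ ≤ K * ‖X *ᵥ β‖ := by
    have := hL.le_mul_dist β 0
    simpa [dist_eq_norm] using this
  set Q := ∑ i, (X *ᵥ β) i ^ 2 with hQ
  have hQ0 : 0 ≤ Q := Finset.sum_nonneg fun i _ => sq_nonneg _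
  have h2 : ‖X *ᵥ β‖ ≤ √Q := by
    refine (pi_norm_le_iff_of_nonneg (Real.sqrt_nonneg _)).mpr fun i => ?_
    apply Real.le_sqrt_of_sq_le
    rw [Real.norm_eq_abs, sq_abs]
    exact Finset.single_le_sum (f := fun i => (X *ᵥ β) i ^ 2) (fun i _ => sq_nonneg _) (Finset.mem_univ i)
  have h3 : ∀ k, β k ^ 2 ≤ (K : ℝ) ^ 2 * Q := by
    intro k
    have : |β k| ≤ K * √Q := (norm_le_pi_norm β k).trans (h1.trans (by gcongr))
    calc β k ^ 2 = |β k| ^ 2 := (sq_abs _).symm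
      _ ≤ (K * √Q) ^ 2 := by gcongr
      _ = _ := by rw [mul_pow, Real.sq_sqrt hQ0]
  have h4 : ∑ k, β k ^ 2 ≤ p * ((K : ℝ) ^ 2 * Q) := by
    refine (Finset.sum_le_sum fun k _ => h3 k).trans ?_
    simp
  rw [inv_mul_le_iff₀ (by positivity)]
  nlinarith [mul_nonneg (sq_nonneg (K : ℝ)) hQ0]

theorem gauss_eq {n p : ℕ} (X : Matrix (Fin n) (Fin p) ℝ) (h : Function.Injective X.mulVec)
    {g : ℝ} (hg : 0 < g) : ∃ C ≥ 0, ∀ s > 0, ∀ β,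
      gaussPdf (0 : Fin p → ℝ) ((g * s) • (Xᵀ * X)⁻¹) β
        = C * (√s ^ p)⁻¹ * Real.exp (-(∑ i, (X *ᵥ β) i ^ 2) / (2 * g * s)) := by
  have hpd : (Xᵀ * X).PosDef := by
    have := Matrix.PosDef.conjTranspose_mul_self X h
    simpa [Matrix.conjTranspose_eq_transpose_of_trivial] using this
  have hdet := hpd.det_pos
  have hu : IsUnit (Xᵀ * X).det := hdet.ne'.isUnit
  refine ⟨(2 * π) ^ (-(p : ℝ) / 2) * (√(g ^ p * (Xᵀ * X).det⁻¹))⁻¹, by positivity, fun s hs β => ?_⟩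
  have hinv : ((g * s) • (Xᵀ * X)⁻¹)⁻¹ = (g * s)⁻¹ • (Xᵀ * X) := by
    apply Matrix.inv_eq_left_inv
    rw [Matrix.smul_mul, Matrix.mul_smul, smul_smul, inv_mul_cancel₀ (by positivity), one_smul,
      Matrix.mul_nonsing_inv _ hu]
  unfold gaussPdf
  rw [hinv, Matrix.det_smul, Matrix.det_nonsing_inv, Ring.inverse_eq_inv', Fintype.card_fin]
  have e1 : ((g * s) ^ p * (Xᵀ * X).det⁻¹) ^ (-(1 : ℝ) / 2)
      = (√(g ^ p * (Xᵀ * X).det⁻¹))⁻¹ * (√s ^ p)⁻¹ := by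
    rw [neg_div, Real.rpow_neg (by positivity), ← Real.sqrt_eq_rpow, ← mul_inv, mul_pow,
      mul_right_comm, Real.sqrt_mul (by positivity)]
    congr 2
    rw [Real.sqrt_eq_iff_mul_self_eq (by positivity) (by positivity), ← mul_pow, Real.mul_self_sqrt hs.le]
  have e2 : β ⬝ᵥ ((g * s)⁻¹ • (Xᵀ * X)) *ᵥ β = (g * s)⁻¹ * ∑ i, (X *ᵥ β) i ^ 2 := by
    rw [Matrix.smul_mulVec, dotProduct_smul, smul_eq_mul, ← Matrix.mulVec_mulVec,
      Matrix.dotProduct_mulVec, Matrix.vecMul_transpose]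
    simp [dotProduct, sq]
  have e3 : -(1 / 2) * ((g * s)⁻¹ * ∑ i, (X *ᵥ β) i ^ 2)
      = -(∑ i, (X *ᵥ β) i ^ 2) / (2 * g * s) := by
    field_simp
  rw [e1, sub_zero, e2, e3]
  ring

theorem alpha_step {s : ℝ} (hs : 0 < s) (a b : ℝ) (μ : Measure (ℝ × ℝ)) [SFinite μ] :
    ∫⁻ α : ℝ, ∫⁻ w : ℝ × ℝ, ENNReal.ofReal (nd s (w.1 - α - a) * nd s (w.2 - α - b)) ∂μ
      = ENNReal.ofReal ((2 * π * s)⁻¹ * √(π * s)) *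
        ∫⁻ w : ℝ × ℝ, ENNReal.ofReal (Real.exp (-(w.1 - w.2 - (a - b)) ^ 2 / (4 * s))) ∂μ := by
  rw [lintegral_lintegral_swap]
  · rw [← lintegral_const_mul' _ _ ENNReal.ofReal_ne_top]
    refine lintegral_congr fun w => ?_
    have key : ∀ α : ℝ, nd s (w.1 - α - a) * nd s (w.2 - α - b)
        = ((2 * π * s)⁻¹ * Real.exp (-(w.1 - w.2 - (a - b)) ^ 2 / (4 * s))) *
          Real.exp (-(1 / s) * (α - (w.1 + w.2 - a - b) / 2) ^ 2) := by
      intro α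
      rw [nd_mul hs, mul_assoc (2 * π * s)⁻¹, ← Real.exp_add]
      congr 2
      field_simp
      ring
    simp only [key]
    simp only [ENNReal.ofReal_mul' (Real.exp_pos _).le]
    rw [lintegral_const_mul' _ _ (ENNReal.mul_ne_top ENNReal.ofReal_ne_top ENNReal.ofReal_ne_top),
      lint_gauss (by positivity), ENNReal.ofReal_mul (by positivity)]
    have : π / (1 / s) = π * s := by field_simp
    rw [this]
    ring
  · have h1 := continuous_nd s
    have : Continuous (fun q : ℝ × (ℝ × ℝ) => nd s (q.2.1 - q.1 - a) * nd s (q.2.2 - q.1 - b)) := by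
      fun_prop
    exact this.measurable.ennreal_ofReal.aemeasurable

theorem beta_step {s g : ℝ} (hs : 0 < s) (hg : 0 < g) {κ : ℝ} (hk0 : 0 < κ) (hk1 : κ ≤ 1 / 8)
    (hk2 : κ ≤ 1 / (16 * g)) (u Q : ℝ) (hQ : 0 ≤ Q) (hu : u ^ 2 ≤ 2 * Q) (μ : Measure (ℝ × ℝ)) :
    ENNReal.ofReal (Real.exp (-Q / (2 * g * s))) *
        ∫⁻ w : ℝ × ℝ, ENNReal.ofReal (Real.exp (-(w.1 - w.2 - u) ^ 2 / (4 * s))) ∂μ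
      ≤ ENNReal.ofReal (Real.exp (-Q / (4 * g * s))) *
        ∫⁻ w : ℝ × ℝ, ENNReal.ofReal (Real.exp (-κ * (w.1 - w.2) ^ 2 / s)) ∂μ := by
  rw [← lintegral_const_mul' _ _ ENNReal.ofReal_ne_top,
    ← lintegral_const_mul' _ _ ENNReal.ofReal_ne_top]
  refine lintegral_mono fun w => ?_
  rw [← ENNReal.ofReal_mul (Real.exp_pos _).le, ← ENNReal.ofReal_mul (Real.exp_pos _).le,
    ← Real.exp_add, ← Real.exp_add]
  apply ENNReal.ofReal_le_ofReal
  apply Real.exp_le_exp.mpr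
  set d := w.1 - w.2
  have h1 : κ * d ^ 2 ≤ 2 * κ * (d - u) ^ 2 + 4 * κ * Q := by
    have : d ^ 2 ≤ 2 * (d - u) ^ 2 + 4 * Q := by nlinarith [sq_nonneg (d - 2 * u)]
    nlinarith
  have h2 : 4 * κ * Q ≤ Q / (4 * g) := by
    have : Q / (4 * g) = 4 * (1 / (16 * g)) * Q := by field_simp; norm_num
    rw [this]; gcongr
  have h3 : 2 * κ * (d - u) ^ 2 ≤ (d - u) ^ 2 / 4 := by nlinarith [sq_nonneg (d - u)]
  have h4 : κ * d ^ 2 / s ≤ ((d - u) ^ 2 / 4 + Q / (4 * g)) / s := by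
    gcongr; linarith
  have e : ((d - u) ^ 2 / 4 + Q / (4 * g)) / s = (d - u) ^ 2 / (4 * s) + Q / (2 * g * s) - Q / (4 * g * s) := by
    field_simp; ring
  rw [e] at h4
  simp only [neg_div, neg_mul]
  linarith

theorem beta_int {n p : ℕ} (X : Matrix (Fin n) (Fin p) ℝ) (h : Function.Injective X.mulVec)
    {g : ℝ} (hg : 0 < g) : ∃ K ≥ 0, ∀ s > 0,
      ∫⁻ β : Fin p → ℝ, ENNReal.ofReal (Real.exp (-(∑ i, (X *ᵥ β) i ^ 2) / (4 * g * s)))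
        ≤ ENNReal.ofReal (K * √s ^ p) := by
  obtain ⟨c, hc, hcb⟩ := coercive X h
  refine ⟨√(π * (4 * g) / c) ^ p, by positivity, fun s hs => ?_⟩
  set b := c / (4 * g * s) with hb
  have hb0 : 0 < b := by positivity
  calc _ ≤ ∫⁻ β : Fin p → ℝ, ENNReal.ofReal (∏ k, Real.exp (-b * (β k) ^ 2)) := by
        refine lintegral_mono fun β => ENNReal.ofReal_le_ofReal ?_
        rw [← Real.exp_sum]
        apply Real.exp_le_exp.mpr
        rw [← Finset.mul_sum, hb, neg_div, neg_mul, neg_le_neg_iff, div_mul_eq_mul_div]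
        gcongr
        exact hcb β
    _ = ∏ k : Fin p, ∫⁻ x : ℝ, ENNReal.ofReal (Real.exp (-b * x ^ 2)) := by
        rw [volume_pi]
        exact pi_lint _ (fun _ x => Real.exp (-b * x ^ 2)) (fun _ => integrable_exp_neg_mul_sq hb0)
          (fun _ _ => (Real.exp_pos _).le)
    _ = _ := by
        have := lint_gauss hb0 0
        simp only [sub_zero] at this
        rw [this, Finset.prod_const, Finset.card_univ, Fintype.card_fin, ← ENNReal.ofReal_pow (by positivity),
          ← mul_pow, ← Real.sqrt_mul (by positivity)]
        congr 3
        rw [hb]; field_simp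

theorem H_bound {s κ t : ℝ} (hs : 0 < s) (hk : 0 < κ) {A B : Set ℝ} (hA : MeasurableSet A)
    (hB : MeasurableSet B) (hAt : ∀ x ∈ A, x ≤ t) (hBt : ∀ x ∈ B, t ≤ x) :
    ∫⁻ w : ℝ × ℝ, ENNReal.ofReal (Real.exp (-κ * (w.1 - w.2) ^ 2 / s))
        ∂((volume.restrict A).prod (volume.restrict B)) ≤ ENNReal.ofReal (π / κ * s) := by
  rw [Measure.prod_restrict]
  calc _ ≤ ∫⁻ w : ℝ × ℝ in A ×ˢ B, ENNReal.ofReal (Real.exp (-(κ / s) * (w.1 - t) ^ 2)) *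
          ENNReal.ofReal (Real.exp (-(κ / s) * (w.2 - t) ^ 2)) ∂(volume.prod volume) := by
        refine setLIntegral_mono' (hA.prod hB) fun w hw => ?_
        rw [← ENNReal.ofReal_mul (Real.exp_pos _).le, ← Real.exp_add]
        apply ENNReal.ofReal_le_ofReal
        apply Real.exp_le_exp.mpr
        have h1 := hAt _ hw.1
        have h2 := hBt _ hw.2
        have h3 : (w.1 - t) ^ 2 + (w.2 - t) ^ 2 ≤ (w.1 - w.2) ^ 2 := by
          nlinarith [mul_nonneg (sub_nonneg.mpr h1) (sub_nonneg.mpr h2)]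
        have h4 := mul_le_mul_of_nonneg_left h3 (div_pos hk hs).le
        have e : -κ * (w.1 - w.2) ^ 2 / s = -(κ / s * (w.1 - w.2) ^ 2) := by ring
        rw [e]; linarith
    _ ≤ _ := setLIntegral_le_lintegral _ _
    _ = _ := by
        have hm : Measurable fun x : ℝ => ENNReal.ofReal (Real.exp (-(κ / s) * (x - t) ^ 2)) := by
          fun_prop
        rw [lintegral_prod_mul hm.aemeasurable hm.aemeasurable, lint_gauss (by positivity),
          ← ENNReal.ofReal_mul (by positivity), Real.mul_self_sqrt (by positivity)]
        congr 1
        field_simp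

theorem H_bound' {s κ : ℝ} (hs : 0 < s) (hk : 0 < κ) (A B : Set ℝ) :
    ∫⁻ w : ℝ × ℝ, ENNReal.ofReal (Real.exp (-κ * (w.1 - w.2) ^ 2 / s))
        ∂((volume.restrict A).prod (volume.restrict B)) ≤ volume A * volume B := by
  rw [Measure.prod_restrict]
  calc _ ≤ ∫⁻ w : ℝ × ℝ in A ×ˢ B, 1 ∂(volume.prod volume) := by
        refine lintegral_mono fun w => ?_
        rw [ENNReal.ofReal_le_one, Real.exp_le_one_iff, neg_mul, neg_div, neg_nonpos]
        positivity
    _ = _ := by rw [setLIntegral_one, Measure.prod_prod]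

theorem s_int (A D : ℝ) (L : ENNReal) (hL : L ≠ ⊤) (H : ℝ → ENNReal)
    (hA : 0 ≤ A)
    (h1 : ∀ s > 0, H s ≤ ENNReal.ofReal (D * s)) (h2 : ∀ s > 0, H s ≤ L) :
    ∫⁻ s in Set.Ioi (0 : ℝ), ENNReal.ofReal (A * s ^ (-(3 : ℝ) / 2)) * H s < ⊤ := by
  rw [← Set.Ioc_union_Ioi_eq_Ioi (zero_le_one : (0 : ℝ) ≤ 1)]
  refine (lintegral_union_le _ _ _).trans_lt (ENNReal.add_lt_top.mpr ⟨?_, ?_⟩)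
  · calc _ ≤ ∫⁻ s in Set.Ioc (0 : ℝ) 1, ENNReal.ofReal (A * D * s ^ (-(1 : ℝ) / 2)) := by
          refine setLIntegral_mono' measurableSet_Ioc fun s hs => ?_
          refine (mul_le_mul_right (h1 s hs.1) _).trans ?_
          rw [← ENNReal.ofReal_mul (mul_nonneg hA (Real.rpow_nonneg hs.1.le _))]
          apply ENNReal.ofReal_le_ofReal
          have : s ^ (-(1 : ℝ) / 2) = s ^ (-(3 : ℝ) / 2) * s := by
            rw [← Real.rpow_add_one hs.1.ne']; norm_num
          rw [this]
          apply le_of_eq; ring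
      _ < ⊤ := by
          have : IntegrableOn (fun s : ℝ => s ^ (-(1 : ℝ) / 2)) (Set.Ioc 0 1) :=
            (intervalIntegrable_iff_integrableOn_Ioc_of_le zero_le_one).mp
              (intervalIntegral.intervalIntegrable_rpow' (by norm_num))
          exact (this.const_mul (A * D)).lintegral_lt_top
  · calc _ ≤ ∫⁻ s in Set.Ioi (1 : ℝ), ENNReal.ofReal (A * s ^ (-(3 : ℝ) / 2)) * L := by
          refine setLIntegral_mono' measurableSet_Ioi fun s hs => ?_
          exact mul_le_mul_right (h2 s (zero_lt_one.trans hs)) _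
      _ < ⊤ := by
          rw [lintegral_mul_const' _ _ hL]
          have : IntegrableOn (fun s : ℝ => s ^ (-(3 : ℝ) / 2)) (Set.Ioi 1) :=
            integrableOn_Ioi_rpow_of_lt (by norm_num) zero_lt_one
          exact ENNReal.mul_lt_top (this.const_mul A).lintegral_lt_top hL.lt_top

end StarAux

/-- Posterior existence for the STAR count regression model under the improper
prior `p(α, σ²) ∝ σ⁻²` and the g-prior on `β`: if the data contain two distinct
positive counts, the marginal likelihood is finite. -/
theorem star_posterior_exists (n p : ℕ) (y : Fin n → ℕ)
    (I : Fin n → Set ℝ)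
    (hI : ∀ i, I i = if y i = 0 then Set.Iio (0 : ℝ)
      else Set.Ico (Real.log (y i)) (Real.log (y i + 1)))
    (X : Matrix (Fin n) (Fin p) ℝ)
    (hcent : Xᵀ *ᵥ (fun _ => (1 : ℝ)) = 0)
    (hrank : (Matrix.of fun i => Fin.cons (1 : ℝ) (fun j => X i j)
        : Matrix (Fin n) (Fin (p + 1)) ℝ).rank = p + 1)
    (g : ℝ) (hg : 0 < g)
    (hcounts : ∃ i j : Fin n, i ≠ j ∧ 0 < y i ∧ y i < y j) :
    (∫⁻ s in Set.Ioi (0 : ℝ), ∫⁻ β : Fin p → ℝ, ∫⁻ α : ℝ,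
        ∫⁻ z in (Set.univ.pi I),
          ENNReal.ofReal
            ((∏ i, nd s (z i - α - (X *ᵥ β) i)) *
              gaussPdf (0 : Fin p → ℝ) ((g * s) • (Xᵀ * X)⁻¹) β * s⁻¹)) < ⊤ := by
  obtain ⟨i, j, hij, hi, hlt⟩ := hcounts
  have hinj := StarAux.inj X hrank
  obtain ⟨C, hC, hgauss⟩ := StarAux.gauss_eq X hinj hg
  obtain ⟨K, hK, hbeta⟩ := StarAux.beta_int X hinj hg
  have hIi : I i = Set.Ico (Real.log (y i)) (Real.log (y i + 1)) := by
    rw [hI, if_neg hi.ne']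
  have hIj : I j = Set.Ico (Real.log (y j)) (Real.log (y j + 1)) := by
    rw [hI, if_neg (hi.trans hlt).ne']
  obtain ⟨κ, hk0, hk1, hk2⟩ : ∃ κ : ℝ, 0 < κ ∧ κ ≤ 1 / 8 ∧ κ ≤ 1 / (16 * g) :=
    ⟨min (1 / 8) (1 / (16 * g)), lt_min (by norm_num) (by positivity), min_le_left _ _,
      min_le_right _ _⟩
  set μ := (volume.restrict (I i)).prod (volume.restrict (I j)) with hμ
  set H : ℝ → ENNReal := fun s =>
    ∫⁻ w : ℝ × ℝ, ENNReal.ofReal (Real.exp (-κ * (w.1 - w.2) ^ 2 / s)) ∂μ with hH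
  have hH1 : ∀ s > 0, H s ≤ ENNReal.ofReal (π / κ * s) := by
    intro s hs
    refine StarAux.H_bound (t := Real.log (y i + 1)) hs hk0 ?_ ?_ ?_ ?_
    · rw [hIi]; exact measurableSet_Ico
    · rw [hIj]; exact measurableSet_Ico
    · intro x hx
      rw [hIi] at hx
      exact hx.2.le
    · intro x hx
      rw [hIj] at hx
      refine le_trans (Real.log_le_log (by positivity) ?_) hx.1
      exact_mod_cast hlt
  have hH2 : ∀ s > 0, H s ≤ volume (I i) * volume (I j) := fun s hs =>
    StarAux.H_bound' hs hk0 _ _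
  have hL : volume (I i) * volume (I j) ≠ ⊤ := by
    rw [hIi, hIj, Real.volume_Ico, Real.volume_Ico]
    exact ENNReal.mul_ne_top ENNReal.ofReal_ne_top ENNReal.ofReal_ne_top
  refine lt_of_le_of_lt ?_ (StarAux.s_int (C * K * ((2 * π)⁻¹ * √π)) (π / κ) _ hL H (by positivity)
    hH1 hH2)
  refine setLIntegral_mono' measurableSet_Ioi fun s hs => ?_
  have hs : 0 < s := hs
  -- bound for fixed `s` and `β`
  have hfix : ∀ β : Fin p → ℝ, (∫⁻ α : ℝ, ∫⁻ z in (Set.univ.pi I), ENNReal.ofReal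
            ((∏ i, nd s (z i - α - (X *ᵥ β) i)) *
              gaussPdf (0 : Fin p → ℝ) ((g * s) • (Xᵀ * X)⁻¹) β * s⁻¹))
      ≤ ENNReal.ofReal (C * (√s ^ p)⁻¹ * s⁻¹ * ((2 * π * s)⁻¹ * √(π * s))) * H s *
        ENNReal.ofReal (Real.exp (-(∑ i, (X *ᵥ β) i ^ 2) / (4 * g * s))) := by
    intro β
    set Q := ∑ i, (X *ᵥ β) i ^ 2 with hQ
    have hQ0 : 0 ≤ Q := Finset.sum_nonneg fun i _ => sq_nonneg _
    have hu : ((X *ᵥ β) i - (X *ᵥ β) j) ^ 2 ≤ 2 * Q := by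
      have : (X *ᵥ β) i ^ 2 + (X *ᵥ β) j ^ 2 ≤ Q := by
        rw [← Finset.sum_pair (f := fun k => (X *ᵥ β) k ^ 2) hij]
        exact Finset.sum_le_sum_of_subset_of_nonneg (Finset.subset_univ _)
          fun k _ _ => sq_nonneg _
      nlinarith [sq_nonneg ((X *ᵥ β) i + (X *ᵥ β) j)]
    simp only [mul_assoc _ (gaussPdf _ _ _)]
    rw [hgauss s hs β]
    have hP : 0 ≤ C * (√s ^ p)⁻¹ * Real.exp (-Q / (2 * g * s)) * s⁻¹ := by positivity
    calc _ ≤ _ := lintegral_mono fun α => StarAux.inner_bound I hs α (X *ᵥ β) i j hij _ hP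
      _ = _ := by
        rw [lintegral_const_mul' _ _ ENNReal.ofReal_ne_top, StarAux.alpha_step hs]
      _ = ENNReal.ofReal (C * (√s ^ p)⁻¹ * s⁻¹ * ((2 * π * s)⁻¹ * √(π * s))) *
          (ENNReal.ofReal (Real.exp (-Q / (2 * g * s))) * ∫⁻ w : ℝ × ℝ, ENNReal.ofReal
            (Real.exp (-(w.1 - w.2 - ((X *ᵥ β) i - (X *ᵥ β) j)) ^ 2 / (4 * s))) ∂μ) := by
        rw [← mul_assoc, ← mul_assoc, ← ENNReal.ofReal_mul hP, ← ENNReal.ofReal_mul (by positivity)]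
        congr 2
        ring
      _ ≤ _ := by
        rw [mul_assoc (ENNReal.ofReal _) (H s), mul_comm (H s)]
        refine mul_le_mul_right ?_ _
        exact StarAux.beta_step hs hg hk0 hk1 hk2 _ Q hQ0 hu μ
  refine (lintegral_mono hfix).trans ?_
  have hHs : H s ≠ ⊤ := ((hH2 s hs).trans_lt hL.lt_top).ne
  rw [lintegral_const_mul' _ _ (ENNReal.mul_ne_top ENNReal.ofReal_ne_top hHs)]
  refine (mul_le_mul_right (hbeta s hs) _).trans ?_
  rw [mul_right_comm, ← ENNReal.ofReal_mul (by positivity)]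
  refine mul_le_mul_left (ENNReal.ofReal_le_ofReal ?_) _
  have e1 : s ^ (-(3 : ℝ) / 2) = s⁻¹ * s⁻¹ * √s := by
    rw [Real.sqrt_eq_rpow, ← Real.rpow_neg_one, ← Real.rpow_add hs, ← Real.rpow_add hs]
    norm_num
  have e2 : (√s ^ p)⁻¹ * √s ^ p = 1 := inv_mul_cancel₀ (by positivity)
  rw [e1, Real.sqrt_mul Real.pi_pos.le, mul_inv (2 * π)]
  apply le_of_eq
  calc _ = C * K * ((2 * π)⁻¹ * √π) * (s⁻¹ * s⁻¹ * √s) * ((√s ^ p)⁻¹ * √s ^ p) := by ring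
    _ = _ := by rw [e2, mul_one]
end
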